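/- There exist constants c ∈ (0,1), N > 0 and C > 0 such that for all ν > N, every positive integer k, every j that is the k-th positive zero of J_ν with j ≥ (1+c)ν, and every x* ≥ ν satisfying x*·g(ν/x*) = k − 1/4, one has | j − x* | ≤ C/(ν + k). -/

import Mathlib

open Real MeasureTheory Set

/-- The Bessel function of the first kind of order `ν ≥ 0`, for `x > 0`, via the
integral representation. -/
noncomputable def besselJ (ν x : ℝ) : ℝ :=
  (1 / π) * (∫ θ in (0:ℝ)..π, Real.cos (x * Real.sin θ - ν * θ)) -
    (Real.sin (ν * π) / π) * ∫ t in Set.Ioi (0:ℝ), Real.exp (-x * Real.sinh t - ν * t)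

/-- The function `g(t) = (√(1-t²) - t arccos t)/π`. -/
noncomputable def gfun (t : ℝ) : ℝ := (Real.sqrt (1 - t ^ 2) - t * Real.arccos t) / π

/-- `j` is the `k`-th positive zero of `J_ν`: `j > 0`, `J_ν(j) = 0`, and there are exactly
`k - 1` zeros of `J_ν` in `(0, j)`. -/
def IsKthZero (ν : ℝ) (k : ℕ) (j : ℝ) : Prop :=
  0 < j ∧ besselJ ν j = 0 ∧ {x : ℝ | 0 < x ∧ x < j ∧ besselJ ν x = 0}.ncard = k - 1

/-
Let `φ(x) = √(x² - ν²) - ν arccos (ν / x) = π x g(ν / x)` be the Debye phase. In modified Prüfer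
coordinates on `(ν, ∞)` the zeros of `J_ν` are the points where its phase `ψ` is a multiple of `π`,
and `ψ' = φ' (1 + R sin² ψ)` with `0 ≤ R ≤ 1 / (4 φ²)`. Hence `ψ - φ` increases while
`ψ - φ + 1 / (4 φ)` decreases, and both have the same limit `L` at infinity. Stationary phase for
`J_ν` gives `L ≡ -3π/4` modulo `π`; since `J_ν` does not vanish on `(0, ν]`, the phase starts
out in `(-π, 0)`, and a barrier argument near the turning point leaves only `L = -3π/4`. The
`k`-th zero `j` has `ψ(j) = (k - 1) π`, so `0 ≤ φ(j) - (k - 1/4) π ≤ 1 / (4 φ(j))`, that is,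
`φ(j)` exceeds `φ(x*)` by at most `1 / (4 φ(j))`, and convexity of `φ` turns this into a bound on
`j - x*`.
-/

section OscillatoryIntegrals

open Complex Filter Topology intervalIntegral

lemma norm_cexp_neg_mul_sq_le_one {b : ℂ} (hb : 0 ≤ b.re) (y : ℝ) :
    ‖cexp (-b * (y : ℂ) ^ 2)‖ ≤ 1 := by
  rw [norm_cexp_neg_mul_sq, Real.exp_le_one_iff, neg_mul, neg_nonpos]
  positivity

lemma hasDerivAt_cexp_neg_mul_sq_div {b : ℂ} (hb : b ≠ 0) {y : ℝ} (hy : y ≠ 0) :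
    HasDerivAt (fun t : ℝ => cexp (-b * (t : ℂ) ^ 2) / (-2 * b * t))
      (cexp (-b * (y : ℂ) ^ 2) + cexp (-b * (y : ℂ) ^ 2) / (2 * b * y ^ 2)) y := by
  have hyC : (y : ℂ) ≠ 0 := ofReal_ne_zero.2 hy
  have hid : HasDerivAt (fun t : ℝ => (t : ℂ)) 1 y := ofRealCLM.hasDerivAt
  refine (((hid.pow 2).const_mul (-b)).cexp.div (hid.const_mul (-2 * b))
    (by simp [hb, hyC])).congr_deriv ?_
  simp only [Pi.pow_apply]
  field_simp
  push_cast
  ring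

lemma norm_integral_cexp_neg_mul_sq_div_le {b : ℂ} (hb : 0 ≤ b.re) (hb0 : b ≠ 0) {T T' : ℝ}
    (hT : 0 < T) (hTT' : T ≤ T') :
    ‖∫ y in T..T', cexp (-b * (y : ℂ) ^ 2) / (2 * b * y ^ 2)‖ ≤
      1 / (2 * ‖b‖) * (T⁻¹ - T'⁻¹) := by
  have hpos : ∀ y ∈ uIcc T T', 0 < y := fun y hy => hT.trans_le (uIcc_of_le hTT' ▸ hy).1
  have hderiv : ∀ y ∈ uIcc T T', HasDerivAt (fun t : ℝ => 1 / (2 * ‖b‖) * -t⁻¹)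
      (1 / (2 * ‖b‖ * y ^ 2)) y := fun y hy =>
    ((hasDerivAt_inv (hpos y hy).ne').neg.const_mul _).congr_deriv (by field_simp)
  have hint : ContinuousOn (fun y : ℝ => 1 / (2 * ‖b‖ * y ^ 2)) (uIcc T T') :=
    continuousOn_const.div (by fun_prop) fun y hy => by have := hpos y hy; positivity
  refine (norm_integral_le_of_norm_le hTT' (ae_of_all _ fun y _ => ?_)
    hint.intervalIntegrable).trans_eq ?_
  · rw [norm_div, show ‖2 * b * (y : ℂ) ^ 2‖ = 2 * ‖b‖ * y ^ 2 by simp]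
    gcongr
    exact norm_cexp_neg_mul_sq_le_one hb y
  · rw [integral_eq_sub_of_hasDerivAt hderiv hint.intervalIntegrable]
    ring

lemma norm_integral_cexp_neg_mul_sq_le {b : ℂ} (hb : 0 ≤ b.re) (hb0 : b ≠ 0) {T T' : ℝ}
    (hT : 0 < T) (hTT' : T ≤ T') :
    ‖∫ y in T..T', cexp (-b * (y : ℂ) ^ 2)‖ ≤ 1 / (‖b‖ * T) := by
  have hpos : ∀ y ∈ uIcc T T', 0 < y := fun y hy => hT.trans_le (uIcc_of_le hTT' ▸ hy).1
  have hne : ∀ y ∈ uIcc T T', 2 * b * (y : ℂ) ^ 2 ≠ 0 := fun y hy => by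
    simp [hb0, (hpos y hy).ne']
  have hcont : ContinuousOn (fun y : ℝ => cexp (-b * (y : ℂ) ^ 2)) (uIcc T T') := by fun_prop
  have hcont' : ContinuousOn (fun y : ℝ => cexp (-b * (y : ℂ) ^ 2) / (2 * b * y ^ 2))
      (uIcc T T') := hcont.div (by fun_prop) hne
  have hparts := integral_eq_sub_of_hasDerivAt
    (fun y hy => hasDerivAt_cexp_neg_mul_sq_div hb0 (hpos y hy).ne')
    (hcont.add hcont').intervalIntegrable
  rw [integral_add hcont.intervalIntegrable hcont'.intervalIntegrable] at hparts
  have hboundary : ∀ y : ℝ, 0 < y →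
      ‖cexp (-b * (y : ℂ) ^ 2) / (-2 * b * y)‖ ≤ 1 / (2 * ‖b‖) * y⁻¹ := fun y hy => by
    rw [norm_div, show 1 / (2 * ‖b‖) * y⁻¹ = 1 / (2 * ‖b‖ * y) by field_simp,
      show ‖-2 * b * (y : ℂ)‖ = 2 * ‖b‖ * y by simp [abs_of_pos hy]]
    gcongr
    exact norm_cexp_neg_mul_sq_le_one hb y
  rw [eq_sub_of_add_eq hparts]
  calc _ ≤ 1 / (2 * ‖b‖) * T'⁻¹ + 1 / (2 * ‖b‖) * T⁻¹ + 1 / (2 * ‖b‖) * (T⁻¹ - T'⁻¹) :=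
        (norm_sub_le _ _).trans (add_le_add ((norm_sub_le _ _).trans (add_le_add
          (hboundary T' (hT.trans_le hTT')) (hboundary T hT)))
          (norm_integral_cexp_neg_mul_sq_div_le hb hb0 hT hTT'))
    _ = 1 / (‖b‖ * T) := by field_simp; ring

lemma norm_gaussian_sub_integral_le_of_re_pos {b : ℂ} (hb : 0 < b.re) {T : ℝ} (hT : 0 < T) :
    ‖(π / b) ^ (1 / 2 : ℂ) / 2 - ∫ y in (0 : ℝ)..T, cexp (-b * (y : ℂ) ^ 2)‖ ≤
      1 / (‖b‖ * T) := by
  have hb0 : b ≠ 0 := by rintro rfl; simp at hb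
  have hlim := intervalIntegral_tendsto_integral_Ioi 0
    (integrable_cexp_neg_mul_sq hb).integrableOn tendsto_id
  rw [integral_gaussian_complex_Ioi hb] at hlim
  refine le_of_tendsto (hlim.sub_const _).norm ?_
  filter_upwards [eventually_ge_atTop T] with T' hT'
  have hint : ∀ u v : ℝ, IntervalIntegrable (fun y : ℝ => cexp (-b * (y : ℂ) ^ 2)) volume u v :=
    fun u v => Continuous.intervalIntegrable (by fun_prop) u v
  rw [id, integral_interval_sub_left (hint _ _) (hint _ _)]
  exact norm_integral_cexp_neg_mul_sq_le hb.le hb0 hT hT'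

lemma norm_gaussian_sub_integral_le {b : ℂ} (hb : 0 ≤ b.re) (hb0 : b ≠ 0) {T : ℝ}
    (hT : 0 < T) :
    ‖(π / b) ^ (1 / 2 : ℂ) / 2 - ∫ y in (0 : ℝ)..T, cexp (-b * (y : ℂ) ^ 2)‖ ≤
      1 / (‖b‖ * T) := by
  have hshift : Tendsto (fun ε : ℝ => b + ε) (𝓝[>] 0) (𝓝 b) := by
    have : Continuous fun ε : ℝ => b + ε := by fun_prop
    simpa using this.continuousWithinAt.tendsto (x := (0 : ℝ)) (s := Ioi 0)
  have hslit : (π / b : ℂ) ∈ slitPlane := by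
    rw [slitPlane, mem_ofPred_eq, div_re, div_im]
    have hsq : 0 < normSq b := normSq_pos.2 hb0
    rcases hb.lt_or_eq with hre | hre
    · exact .inl (by simp only [ofReal_re, ofReal_im, zero_mul, zero_div, add_zero]; positivity)
    · have him : b.im ≠ 0 := fun him => hb0 (Complex.ext hre.symm him)
      exact .inr (by simp [hb0, him, pi_ne_zero])
  have hgauss : Tendsto (fun z : ℂ => (π / z) ^ (1 / 2 : ℂ) / 2) (𝓝 b)
      (𝓝 ((π / b) ^ (1 / 2 : ℂ) / 2)) :=
    ((tendsto_const_nhds.div tendsto_id hb0).cpow tendsto_const_nhds hslit).div_const 2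
  have hint : Tendsto (fun z : ℂ => ∫ y in (0 : ℝ)..T, cexp (-z * (y : ℂ) ^ 2)) (𝓝 b)
      (𝓝 (∫ y in (0 : ℝ)..T, cexp (-b * (y : ℂ) ^ 2))) :=
    (continuous_parametric_intervalIntegral_of_continuous'
      (f := fun (z : ℂ) (y : ℝ) => cexp (-z * (y : ℂ) ^ 2)) (by fun_prop) 0 T).tendsto b
  have hbound : Tendsto (fun z : ℂ => 1 / (‖z‖ * T)) (𝓝 b) (𝓝 (1 / (‖b‖ * T))) :=
    tendsto_const_nhds.div (tendsto_id.norm.mul_const T) (by positivity)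
  refine le_of_tendsto_of_tendsto ((hgauss.sub hint).norm.comp hshift) (hbound.comp hshift) ?_
  filter_upwards [self_mem_nhdsWithin] with ε hε
  exact norm_gaussian_sub_integral_le_of_re_pos (by simpa using add_pos_of_nonneg_of_pos hb hε) hT

lemma tendsto_integral_cexp_neg_mul_sq {b : ℂ} (hb : 0 ≤ b.re) (hb0 : b ≠ 0) :
    Tendsto (fun T : ℝ => ∫ y in (0 : ℝ)..T, cexp (-b * (y : ℂ) ^ 2)) atTop
      (𝓝 ((π / b) ^ (1 / 2 : ℂ) / 2)) := by
  rw [tendsto_iff_norm_sub_tendsto_zero]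
  have hdecay : Tendsto (fun T : ℝ => 1 / (‖b‖ * T)) atTop (𝓝 0) :=
    tendsto_const_nhds.div_atTop (tendsto_id.const_mul_atTop (norm_pos_iff.2 hb0))
  refine squeeze_zero' (.of_forall fun _ => norm_nonneg _) ?_ hdecay
  filter_upwards [eventually_gt_atTop 0] with T hT
  rw [norm_sub_rev]
  exact norm_gaussian_sub_integral_le hb hb0 hT

lemma tendsto_fresnel_integral :
    Tendsto (fun T : ℝ => ∫ y in (0 : ℝ)..T, cexp (-(I / 2) * (y : ℂ) ^ 2)) atTop
      (𝓝 (√(π / 2) * cexp (-(π / 4 : ℝ) * I))) := by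
  convert tendsto_integral_cexp_neg_mul_sq (b := I / 2) (by simp) (by simp) using 2
  have hsq : (π / (I / 2) : ℂ) = (√π * (1 - I)) ^ 2 := by
    have hπ : (√π : ℂ) ^ 2 = π := by rw [← ofReal_pow, Real.sq_sqrt pi_nonneg]
    rw [mul_pow, hπ, sub_sq, I_sq, div_div_eq_mul_div, div_eq_iff I_ne_zero]
    linear_combination 2 * (π : ℂ) * I_sq
  have hre : 0 < (√π * (1 - I) : ℂ).re := by
    simpa using Real.sqrt_pos.2 pi_pos
  rw [hsq, one_div, sq_cpow_two_inv hre, ← ofReal_neg, exp_mul_I, ← ofReal_cos, ← ofReal_sin,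
    Real.cos_neg, Real.sin_neg, Real.cos_pi_div_four, Real.sin_pi_div_four,
    Real.sqrt_div pi_nonneg]
  push_cast
  have h2 : (√2 : ℂ) ≠ 0 := by simp
  field_simp
  ring

lemma exists_forall_norm_le_of_tendsto_atTop {E : Type*} [SeminormedAddCommGroup E] {F : ℝ → E}
    (hF : Continuous F) {l : E} (hlim : Tendsto F atTop (𝓝 l)) (a : ℝ) :
    ∃ M, ∀ T, a ≤ T → ‖F T‖ ≤ M := by
  obtain ⟨T₀, hT₀⟩ := eventually_atTop.1 (hlim.norm.eventually_le_const (lt_add_one ‖l‖))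
  obtain ⟨M, hM⟩ := (isCompact_Icc (a := a) (b := T₀)).exists_bound_of_continuousOn hF.continuousOn
  refine ⟨max M (‖l‖ + 1), fun T hT => ?_⟩
  rcases le_total T T₀ with h | h
  · exact (hM T ⟨hT, h⟩).trans (le_max_left _ _)
  · exact (hT₀ T h).trans (le_max_right _ _)

lemma tendsto_integral_mul_comp_mul {F : ℝ → ℂ} (hF : Continuous F) {l : ℂ}
    (hlim : Tendsto F atTop (𝓝 l)) {b : ℝ} (hb : 0 ≤ b) {s : ℝ → ℝ}
    (hs : ContinuousOn s (Icc 0 b)) (hpos : ∀ α ∈ Ioc 0 b, 0 < s α) {h : ℝ → ℂ}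
    (hh : ContinuousOn h (Icc 0 b)) :
    Tendsto (fun r : ℝ => ∫ α in (0 : ℝ)..b, h α * F (r * s α)) atTop
      (𝓝 ((∫ α in (0 : ℝ)..b, h α) * l)) := by
  obtain ⟨M, hM⟩ := exists_forall_norm_le_of_tendsto_atTop hF hlim 0
  rw [← intervalIntegral.integral_mul_const]
  refine tendsto_integral_filter_of_dominated_convergence (fun α => ‖h α‖ * M)
    (.of_forall fun r => ?_) ?_ ?_ (ae_of_all _ fun α hα => ?_)
  · rw [uIoc_of_le hb]
    exact ((hh.mul (hF.comp_continuousOn (hs.const_mul r))).mono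
      Ioc_subset_Icc_self).aestronglyMeasurable measurableSet_Ioc
  · filter_upwards [eventually_ge_atTop 0] with r hr
    refine ae_of_all _ fun α hα => ?_
    rw [uIoc_of_le hb] at hα
    rw [norm_mul]
    gcongr
    exact hM _ (mul_nonneg hr (hpos α hα).le)
  · exact ((uIcc_of_le hb).symm ▸ hh.norm.mul continuousOn_const).intervalIntegrable
  · rw [uIoc_of_le hb] at hα
    exact (hlim.comp (tendsto_id.atTop_mul_const (hpos α hα))).const_mul _

-- Integration by parts against the primitive of `E` exhibits the contribution of `α = 0`.
lemma tendsto_integral_stationary_phase {E : ℝ → ℂ} (hE : Continuous E) {l : ℂ}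
    (hlim : Tendsto (fun T : ℝ => ∫ y in (0 : ℝ)..T, E y) atTop (𝓝 l)) {b : ℝ} (hb : 0 < b)
    {s s' : ℝ → ℝ} (hs : ∀ α ∈ Icc 0 b, HasDerivAt s (s' α) α) (hs' : ContinuousOn s' (Icc 0 b))
    (hs0 : s 0 = 0) (hpos : ∀ α ∈ Ioc 0 b, 0 < s α)
    {h h' : ℝ → ℂ} (hh : ∀ α ∈ Icc 0 b, HasDerivAt h (h' α) α) (hh' : ContinuousOn h' (Icc 0 b)) :
    Tendsto (fun r : ℝ => ∫ α in (0 : ℝ)..b, h α * ((r * s' α) • E (r * s α))) atTop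
      (𝓝 (h 0 * l)) := by
  set F : ℝ → ℂ := fun T => ∫ y in (0 : ℝ)..T, E y
  have hF : ∀ T, HasDerivAt F (E T) T := fun T => (hE.integral_hasStrictDerivAt 0 T).hasDerivAt
  have hFc : Continuous F := continuous_iff_continuousAt.2 fun T => (hF T).continuousAt
  have hsc : ContinuousOn s (Icc 0 b) := fun α hα => (hs α hα).continuousAt.continuousWithinAt
  have hremainder := tendsto_integral_mul_comp_mul hFc hlim hb.le hsc hpos hh'
  have hboundary : Tendsto (fun r : ℝ => h b * F (r * s b)) atTop (𝓝 (h b * l)) :=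
    (hlim.comp (tendsto_id.atTop_mul_const (hpos b ⟨hb, le_rfl⟩))).const_mul _
  rw [← uIcc_of_le hb.le] at hs hs' hsc hh hh'
  have hparts : ∀ r : ℝ, ∫ α in (0 : ℝ)..b, h α * ((r * s' α) • E (r * s α)) =
      h b * F (r * s b) - ∫ α in (0 : ℝ)..b, h' α * F (r * s α) := fun r => by
    have := integral_mul_deriv_eq_deriv_mul hh
      (fun α hα => (hF (r * s α)).scomp α ((hs α hα).const_mul r)) hh'.intervalIntegrable
      ((hs'.const_mul r).smul (hE.comp_continuousOn (hsc.const_mul r))).intervalIntegrable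
    simpa [hs0, F] using this
  rw [integral_eq_sub_of_hasDerivAt hh hh'.intervalIntegrable] at hremainder
  simp_rw [hparts]
  convert hboundary.sub hremainder using 2
  ring

end OscillatoryIntegrals

section PolarAngle

variable {s : Set ℝ} {A B A' B' : ℝ → ℝ}

lemma hasDerivAt_sq_cos_sub_sin_div {ψ : ℝ → ℝ} {x : ℝ} (hA : HasDerivAt A (A' x) x)
    (hB : HasDerivAt B (B' x) x) (hne : A x ^ 2 + B x ^ 2 ≠ 0)
    (hψ : HasDerivAt ψ ((A' x * B x - A x * B' x) / (A x ^ 2 + B x ^ 2)) x) :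
    HasDerivAt (fun y => (A y * cos (ψ y) - B y * sin (ψ y)) ^ 2 / (A y ^ 2 + B y ^ 2)) 0 x := by
  refine ((((hA.mul hψ.cos).sub (hB.mul hψ.sin)).pow 2).div ((hA.pow 2).add (hB.pow 2))
    hne).congr_deriv ?_
  simp only [Pi.add_apply, Pi.sub_apply, Pi.mul_apply, Pi.pow_apply]
  field_simp
  ring

lemma exists_polar_angle (hs : IsOpen s) (hs' : s.OrdConnected)
    (hA : ∀ x ∈ s, HasDerivAt A (A' x) x) (hB : ∀ x ∈ s, HasDerivAt B (B' x) x)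
    (hA' : ContinuousOn A' s) (hB' : ContinuousOn B' s) (hne : ∀ x ∈ s, A x ^ 2 + B x ^ 2 ≠ 0)
    {x₀ ψ₀ : ℝ} (hx₀ : x₀ ∈ s) (hψ₀ : A x₀ * cos ψ₀ = B x₀ * sin ψ₀) :
    ∃ ψ : ℝ → ℝ, ψ x₀ = ψ₀ ∧
      (∀ x ∈ s, HasDerivAt ψ ((A' x * B x - A x * B' x) / (A x ^ 2 + B x ^ 2)) x) ∧
      ∀ x ∈ s, A x * cos (ψ x) = B x * sin (ψ x) := by
  set ω : ℝ → ℝ := fun x => (A' x * B x - A x * B' x) / (A x ^ 2 + B x ^ 2)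
  have hAc : ContinuousOn A s := fun x hx => (hA x hx).continuousAt.continuousWithinAt
  have hBc : ContinuousOn B s := fun x hx => (hB x hx).continuousAt.continuousWithinAt
  have hω : ContinuousOn ω s :=
    ((hA'.mul hBc).sub (hAc.mul hB')).div ((hAc.pow 2).add (hBc.pow 2)) hne
  set ψ : ℝ → ℝ := fun x => ψ₀ + ∫ t in x₀..x, ω t
  have hψ : ∀ x ∈ s, HasDerivAt ψ (ω x) x := fun x hx =>
    (intervalIntegral.integral_hasDerivAt_right
      (hω.mono (hs'.uIcc_subset hx₀ hx)).intervalIntegrable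
      (hω.stronglyMeasurableAtFilter hs x hx) (hω.continuousAt (hs.mem_nhds hx))).const_add _
  have hψx₀ : ψ x₀ = ψ₀ := by simp [ψ]
  refine ⟨ψ, hψx₀, hψ, fun x hx => ?_⟩
  have hderiv : ∀ y ∈ s, HasDerivAt
      (fun y => (A y * cos (ψ y) - B y * sin (ψ y)) ^ 2 / (A y ^ 2 + B y ^ 2)) 0 y :=
    fun y hy => hasDerivAt_sq_cos_sub_sin_div (hA y hy) (hB y hy) (hne y hy) (hψ y hy)
  have hconst := hs.is_const_of_deriv_eq_zero hs'.isPreconnected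
    (fun y hy => (hderiv y hy).differentiableAt.differentiableWithinAt)
    (fun y hy => (hderiv y hy).deriv) hx hx₀
  simpa [hψx₀, hψ₀, hne x hx, sub_eq_zero] using hconst

lemma exists_prufer_phase {r p q : ℝ → ℝ} (hs : IsOpen s) (hs' : s.OrdConnected)
    (hr : ContinuousOn r s) (hp : ContinuousOn p s) (hq : ContinuousOn q s)
    (hA : ∀ x ∈ s, HasDerivAt A (r x * A x + p x * B x) x)
    (hB : ∀ x ∈ s, HasDerivAt B (r x * B x - p x * (1 + q x) * A x) x)
    (hne : ∀ x ∈ s, A x ^ 2 + B x ^ 2 ≠ 0) {x₀ ψ₀ : ℝ} (hx₀ : x₀ ∈ s)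
    (hψ₀ : A x₀ * cos ψ₀ = B x₀ * sin ψ₀) :
    ∃ ψ : ℝ → ℝ, ψ x₀ = ψ₀ ∧
      (∀ x ∈ s, HasDerivAt ψ (p x * (1 + q x * sin (ψ x) ^ 2)) x) ∧
      ∀ x ∈ s, A x ^ 2 = (A x ^ 2 + B x ^ 2) * sin (ψ x) ^ 2 := by
  have hAc : ContinuousOn A s := fun x hx => (hA x hx).continuousAt.continuousWithinAt
  have hBc : ContinuousOn B s := fun x hx => (hB x hx).continuousAt.continuousWithinAt
  obtain ⟨ψ, hψx₀, hψ, hrel⟩ := exists_polar_angle hs hs' hA hB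
    ((hr.mul hAc).add (hp.mul hBc)) ((hr.mul hBc).sub ((hp.mul (hq.const_add 1)).mul hAc))
    hne hx₀ hψ₀
  have hsin : ∀ x ∈ s, A x ^ 2 = (A x ^ 2 + B x ^ 2) * sin (ψ x) ^ 2 := fun x hx => by
    linear_combination (A x * cos (ψ x) + B x * sin (ψ x)) * hrel x hx
      - A x ^ 2 * sin_sq_add_cos_sq (ψ x)
  refine ⟨ψ, hψx₀, fun x hx => (hψ x hx).congr_deriv ?_, hsin⟩
  rw [div_eq_iff (hne x hx)]
  linear_combination p x * q x * hsin x hx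

end PolarAngle

section PhaseComparison

open Filter Topology

lemma exists_tendsto_of_monotoneOn_of_antitoneOn_add {a : ℝ} {f g : ℝ → ℝ}
    (hf : MonotoneOn f (Ioi a)) (hfg : AntitoneOn (fun x => f x + g x) (Ioi a))
    (hg : ∀ x > a, 0 ≤ g x) :
    ∃ L, Tendsto f atTop (𝓝 L) ∧ ∀ x > a, L ∈ Icc (f x) (f x + g x) := by
  have hle : ∀ x > a, ∀ t ≥ x, f t ≤ f x + g x := fun x hx t ht =>
    (le_add_of_nonneg_right (hg t (hx.trans_le ht))).trans (hfg hx (hx.trans_le ht) ht)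
  have hmem : ∀ t, a < max t (a + 1) := fun t => (lt_add_one a).trans_le (le_max_right t _)
  have hmono : Monotone fun t => f (max t (a + 1)) := fun s t hst =>
    hf (hmem s) (hmem t) (max_le_max_right _ hst)
  have hbdd : BddAbove (range fun t => f (max t (a + 1))) :=
    ⟨f (a + 1) + g (a + 1), by
      rintro _ ⟨t, rfl⟩
      exact hle _ (lt_add_one a) _ (le_max_right _ _)⟩
  have hlim : Tendsto f atTop (𝓝 (⨆ t, f (max t (a + 1)))) := by
    refine (tendsto_atTop_ciSup hmono hbdd).congr' ?_
    filter_upwards [eventually_ge_atTop (a + 1)] with t ht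
    rw [max_eq_left ht]
  refine ⟨_, hlim, fun x hx => ⟨ge_of_tendsto hlim ?_, le_of_tendsto hlim ?_⟩⟩
  · filter_upwards [eventually_ge_atTop x] with t ht
    exact hf hx (hx.trans_le ht) ht
  · filter_upwards [eventually_ge_atTop x] with t ht
    exact hle x hx t ht

variable {a : ℝ} {φ ψ p R : ℝ → ℝ}
  (hφ : ∀ x > a, HasDerivAt φ (p x) x)
  (hψ : ∀ x > a, HasDerivAt ψ (p x * (1 + R x * sin (ψ x) ^ 2)) x)

include hφ hψ

lemma monotoneOn_phase_sub (hp : ∀ x > a, 0 ≤ p x) (hR : ∀ x > a, 0 ≤ R x) :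
    MonotoneOn (fun x => ψ x - φ x) (Ioi a) := by
  have hderiv : ∀ x > a, HasDerivAt (fun x => ψ x - φ x) (p x * (R x * sin (ψ x) ^ 2)) x :=
    fun x hx => ((hψ x hx).sub (hφ x hx)).congr_deriv (by ring)
  refine monotoneOn_of_hasDerivWithinAt_nonneg (convex_Ioi a)
    (fun x hx => (hderiv x hx).continuousAt.continuousWithinAt) (fun x hx =>
      (hderiv x (interior_subset hx)).hasDerivWithinAt) fun x hx => ?_
  have hxa := interior_subset hx
  exact mul_nonneg (hp x hxa) (mul_nonneg (hR x hxa) (sq_nonneg _))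

lemma antitoneOn_phase_sub_add_div (hp : ∀ x > a, 0 ≤ p x) (hφpos : ∀ x > a, 0 < φ x)
    (hR : ∀ x > a, 0 ≤ R x) {r : ℝ} (hr : ∀ x > a, R x * φ x ^ 2 ≤ r) :
    AntitoneOn (fun x => ψ x - φ x + r / φ x) (Ioi a) := by
  have hderiv : ∀ x > a, HasDerivAt (fun x => ψ x - φ x + r / φ x)
      (p x * (R x * sin (ψ x) ^ 2 - r / φ x ^ 2)) x := fun x hx =>
    (((hψ x hx).sub (hφ x hx)).add
      ((hasDerivAt_const x r).div (hφ x hx) (hφpos x hx).ne')).congr_deriv (by ring)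
  refine antitoneOn_of_hasDerivWithinAt_nonpos (convex_Ioi a)
    (fun x hx => (hderiv x hx).continuousAt.continuousWithinAt) (fun x hx =>
      (hderiv x (interior_subset hx)).hasDerivWithinAt) fun x hx => ?_
  have hxa := interior_subset hx
  refine mul_nonpos_of_nonneg_of_nonpos (hp x hxa) (sub_nonpos.2 ?_)
  calc R x * sin (ψ x) ^ 2 ≤ R x := mul_le_of_le_one_right (hR x hxa) (sin_sq_le_one _)
    _ ≤ r / φ x ^ 2 := (le_div_iff₀ (by have := hφpos x hxa; positivity)).2 (hr x hxa)

lemma phase_le_mul_of_mul_sq_lt {b q x₀ : ℝ} (hp : ∀ x > a, 0 < p x) (hφpos : ∀ x > a, 0 < φ x)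
    (hR : ∀ x > a, 0 ≤ R x) (hq : 0 ≤ q) (hRq : ∀ x ∈ Ioo a b, R x * φ x ^ 2 * q ^ 2 < q - 1)
    (hx₀ : x₀ ∈ Ioo a b) (hneg : ψ x₀ ≤ 0) : ψ b ≤ q * φ b := by
  have hmem : ∀ x, x₀ ≤ x → a < x := fun x hx => hx₀.1.trans_le hx
  refine image_le_of_deriv_right_lt_deriv_boundary' (f := ψ) (a := x₀)
    (B := fun x => q * φ x) (B' := fun x => q * p x)
    (fun x hx => (hψ x (hmem x hx.1)).continuousAt.continuousWithinAt)
    (fun x hx => (hψ x (hmem x hx.1)).hasDerivWithinAt)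
    (hneg.trans (mul_nonneg hq (hφpos x₀ hx₀.1).le))
    (fun x hx => ((hφ x (hmem x hx.1)).const_mul q).continuousAt.continuousWithinAt)
    (fun x hx => ((hφ x (hmem x hx.1)).const_mul q).hasDerivWithinAt)
    (fun x hx hcross => ?_) (right_mem_Icc.2 hx₀.2.le)
  have hxa := hmem x hx.1
  have hsin : sin (ψ x) ^ 2 ≤ φ x ^ 2 * q ^ 2 := by
    rw [hcross, ← mul_pow, mul_comm q]
    exact sin_sq_le_sq
  have hlt : R x * sin (ψ x) ^ 2 < q - 1 :=
    calc R x * sin (ψ x) ^ 2 ≤ R x * (φ x ^ 2 * q ^ 2) := mul_le_mul_of_nonneg_left hsin (hR x hxa)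
      _ = R x * φ x ^ 2 * q ^ 2 := by ring
      _ < q - 1 := hRq x ⟨hxa, hx.2⟩
  rw [mul_comm q]
  exact mul_lt_mul_of_pos_left (by linarith) (hp x hxa)

end PhaseComparison

section ZeroCounting

lemma exists_nat_mul_pi_eq_of_sin_eq_zero {t : ℝ} (ht : -π < t) (hsin : sin t = 0) :
    ∃ n : ℕ, n * π = t := by
  obtain ⟨n, rfl⟩ := sin_eq_zero_iff.1 hsin
  have hn : (-1 : ℝ) < n := by nlinarith [pi_pos]
  lift n to ℕ using Int.lt_iff_add_one_le.1 (by exact_mod_cast hn)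
  exact ⟨n, by simp⟩

lemma eq_ncard_mul_pi_of_strictMonoOn {a j : ℝ} {ψ : ℝ → ℝ} (hmono : StrictMonoOn ψ (Ioi a))
    (hcont : ContinuousOn ψ (Ioi a)) (hlower : ∀ x > a, -π < ψ x) (hneg : ∃ x > a, ψ x < 0)
    (hj : a < j) (hψj : sin (ψ j) = 0) :
    ψ j = {x ∈ Ioo a j | sin (ψ x) = 0}.ncard * π := by
  obtain ⟨n, hn⟩ := exists_nat_mul_pi_eq_of_sin_eq_zero (hlower j hj) hψj
  obtain ⟨x₀, hx₀, hψx₀⟩ := hneg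
  have himage : ψ '' {x ∈ Ioo a j | sin (ψ x) = 0} = (fun m : ℕ => (m : ℝ) * π) '' Iio n := by
    ext t
    constructor
    · rintro ⟨x, ⟨hx, hsin⟩, rfl⟩
      obtain ⟨m, hm⟩ := exists_nat_mul_pi_eq_of_sin_eq_zero (hlower x hx.1) hsin
      refine ⟨m, ?_, hm⟩
      have hlt := hmono hx.1 hj hx.2
      rw [← hm, ← hn] at hlt
      exact_mod_cast lt_of_mul_lt_mul_right hlt pi_pos.le
    · rintro ⟨m, hm, rfl⟩
      have hmj : (m : ℝ) * π < ψ j := hn ▸ by gcongr; exact hm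
      have hx₀m : ψ x₀ < m * π := hψx₀.trans_le (by positivity)
      have hx₀j : x₀ < j := (hmono.lt_iff_lt hx₀ hj).1 (hx₀m.trans hmj)
      obtain ⟨x, hx, hψx⟩ := intermediate_value_Ioo hx₀j.le
        (hcont.mono fun y hy => hx₀.trans_le hy.1) ⟨hx₀m, hmj⟩
      exact ⟨x, ⟨⟨hx₀.trans hx.1, hx.2⟩, by rw [hψx, sin_nat_mul_pi]⟩, hψx⟩
  have hinj : InjOn ψ {x ∈ Ioo a j | sin (ψ x) = 0} := hmono.injOn.mono fun x hx => hx.1.1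
  rw [← hinj.ncard_image, himage,
    ncard_image_of_injective _ fun m m' h => by simpa [pi_ne_zero] using h, ← hn]
  simp

end ZeroCounting

/-- The leading phase `√(x² - ν²) - ν arccos (ν / x)` of Debye's expansion of `J_ν(x)`. It equals
`π x g(ν / x)`, and is meant for `x ≥ ν ≥ 0`. -/
noncomputable def debyePhase (ν x : ℝ) : ℝ := √(x ^ 2 - ν ^ 2) - ν * arccos (ν / x)

/-- The coefficient `R` by which a Bessel solution deviates from oscillating exactly like
`sin (debyePhase ν)`: after Liouville's change of variables the equation reads `w'' + (1 + R) w = 0`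
in the variable `debyePhase ν`. -/
noncomputable def debyeRemainder (ν x : ℝ) : ℝ :=
  x ^ 2 * (x ^ 2 + 4 * ν ^ 2) / (4 * (x ^ 2 - ν ^ 2) ^ 3)

section DebyePhase

open Filter Topology

variable {ν x : ℝ}

lemma sq_sub_sq_pos (hν : 0 ≤ ν) (hx : ν < x) : 0 < x ^ 2 - ν ^ 2 := by nlinarith

lemma sqrt_one_sub_div_sq (hx : 0 < x) : √(1 - (ν / x) ^ 2) = √(x ^ 2 - ν ^ 2) / x := by
  rw [← sqrt_sq hx.le, ← sqrt_div' _ (sq_nonneg x), sqrt_sq hx.le]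
  congr 1
  field_simp

lemma pi_mul_mul_gfun_div (hx : 0 < x) : π * (x * gfun (ν / x)) = debyePhase ν x := by
  rw [gfun, debyePhase, sqrt_one_sub_div_sq hx]
  field_simp [pi_ne_zero]

lemma debyePhase_self (hν : ν ≠ 0) : debyePhase ν ν = 0 := by simp [debyePhase, hν]

lemma debyePhase_sqrt_two_mul (hν : 0 < ν) : debyePhase ν (√2 * ν) = ν * (1 - π / 4) := by
  have hsqrt : √((√2 * ν) ^ 2 - ν ^ 2) = ν := by
    rw [mul_pow, sq_sqrt zero_le_two, two_mul, add_sub_cancel_right, sqrt_sq hν.le]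
  have harccos : arccos (ν / (√2 * ν)) = π / 4 := by
    rw [div_mul_cancel_right₀ hν.ne', ← sqrt_div_self, ← cos_pi_div_four,
      arccos_cos (by positivity) (by linarith [pi_pos])]
  rw [debyePhase, hsqrt, harccos]
  ring

lemma debyePhase_le_self (hν : 0 ≤ ν) (hx : 0 ≤ x) : debyePhase ν x ≤ x := by
  have hsqrt : √(x ^ 2 - ν ^ 2) ≤ x := sqrt_le_iff.2 ⟨hx, by nlinarith⟩
  have := mul_nonneg hν (arccos_nonneg (ν / x))
  rw [debyePhase]
  linarith

lemma hasDerivAt_sqrt_sq_sub_sq (hx : 0 < x ^ 2 - ν ^ 2) :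
    HasDerivAt (fun y => √(y ^ 2 - ν ^ 2)) (x / √(x ^ 2 - ν ^ 2)) x := by
  refine (((hasDerivAt_pow 2 x).sub_const _).sqrt hx.ne').congr_deriv ?_
  push_cast
  field_simp

lemma hasDerivAt_debyePhase (hν : 0 ≤ ν) (hx : ν < x) :
    HasDerivAt (debyePhase ν) (√(x ^ 2 - ν ^ 2) / x) x := by
  have hx0 : 0 < x := hν.trans_lt hx
  have hpos := sq_sub_sq_pos hν hx
  have hlt : ν / x < 1 := (div_lt_one hx0).2 hx
  refine ((hasDerivAt_sqrt_sq_sub_sq hpos).sub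
    (((hasDerivAt_arccos (by linarith [div_nonneg hν hx0.le]) hlt.ne).comp x
      ((hasDerivAt_const x ν).div (hasDerivAt_id x) hx0.ne')).const_mul ν)).congr_deriv ?_
  rw [sqrt_one_sub_div_sq hx0]
  field_simp
  rw [sq_sqrt hpos.le]
  ring

lemma continuousOn_debyePhase (hν : 0 < ν) : ContinuousOn (debyePhase ν) (Ici ν) := by
  refine ContinuousOn.sub (by fun_prop) (continuousOn_const.mul ?_)
  exact continuous_arccos.comp_continuousOn
    (continuousOn_const.div continuousOn_id fun x hx => (hν.trans_le hx).ne')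

lemma strictMonoOn_debyePhase (hν : 0 < ν) : StrictMonoOn (debyePhase ν) (Ici ν) := by
  refine strictMonoOn_of_hasDerivWithinAt_pos (convex_Ici ν) (continuousOn_debyePhase hν)
    (fun x hx => (hasDerivAt_debyePhase hν.le (interior_Ici.subset hx)).hasDerivWithinAt)
    fun x hx => ?_
  rw [interior_Ici, mem_Ioi] at hx
  exact div_pos (sqrt_pos.2 (sq_sub_sq_pos hν.le hx)) (hν.trans hx)

lemma debyePhase_pos (hν : 0 < ν) (hx : ν < x) : 0 < debyePhase ν x := by
  simpa [debyePhase_self hν.ne'] using strictMonoOn_debyePhase hν self_mem_Ici hx.le hx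

lemma convexOn_debyePhase (hν : 0 < ν) : ConvexOn ℝ (Ici ν) (debyePhase ν) := by
  have hderiv : ∀ x ∈ Ioi ν, HasDerivAt (debyePhase ν) (√(x ^ 2 - ν ^ 2) / x) x :=
    fun x hx => hasDerivAt_debyePhase hν.le hx
  refine MonotoneOn.convexOn_of_deriv (convex_Ici ν) (continuousOn_debyePhase hν) ?_ ?_ <;>
    rw [interior_Ici]
  · exact fun x hx => (hderiv x hx).differentiableAt.differentiableWithinAt
  · intro x hx y hy hxy
    have hx0 : 0 < x := hν.trans hx
    have hy0 : 0 < y := hν.trans hy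
    rw [(hderiv x hx).deriv, (hderiv y hy).deriv, ← sqrt_one_sub_div_sq hx0,
      ← sqrt_one_sub_div_sq hy0]
    gcongr

lemma debyePhase_le (hν : 0 < ν) (hx : ν ≤ x) :
    debyePhase ν x ≤ √(x ^ 2 - ν ^ 2) ^ 3 / (x ^ 2 + 2 * ν ^ 2) := by
  have hmono : MonotoneOn
      (fun y => √(y ^ 2 - ν ^ 2) ^ 3 / (y ^ 2 + 2 * ν ^ 2) - debyePhase ν y) (Ici ν) := by
    refine monotoneOn_of_hasDerivWithinAt_nonneg (convex_Ici ν)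
      (f' := fun y => 4 * ν ^ 2 * √(y ^ 2 - ν ^ 2) ^ 3 / (y * (y ^ 2 + 2 * ν ^ 2) ^ 2)) ?_ ?_ ?_
    · exact (ContinuousOn.div (by fun_prop) (by fun_prop) fun y _ => by positivity).sub
        (continuousOn_debyePhase hν)
    · intro y hy
      rw [interior_Ici, mem_Ioi] at hy
      have hpos := sq_sub_sq_pos hν.le hy
      refine (((((hasDerivAt_sqrt_sq_sub_sq hpos).pow 3).div
        (((hasDerivAt_pow 2 y).add_const _)) (by positivity)).sub
          (hasDerivAt_debyePhase hν.le hy)).congr_deriv ?_).hasDerivWithinAt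
      have hy0 : 0 < y := hν.trans hy
      have hsq := sq_sqrt hpos.le
      simp only [Pi.pow_apply]
      field_simp
      rw [show √(y ^ 2 - ν ^ 2) ^ 4 = (√(y ^ 2 - ν ^ 2) ^ 2) ^ 2 by ring, hsq]
      push_cast
      ring
    · intro y hy
      rw [interior_Ici, mem_Ioi] at hy
      have hy0 : 0 < y := hν.trans hy
      positivity
  have hle := hmono self_mem_Ici hx hx
  simp only [sub_self, debyePhase_self hν.ne', sqrt_zero] at hle
  norm_num at hle
  exact hle

lemma debyeRemainder_nonneg (hν : 0 ≤ ν) (hx : ν < x) : 0 ≤ debyeRemainder ν x := by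
  have := sq_sub_sq_pos hν hx
  rw [debyeRemainder]
  positivity

lemma debyeRemainder_mul_sq_le (hν : 0 < ν) (hx : ν < x) :
    debyeRemainder ν x * debyePhase ν x ^ 2 ≤
      x ^ 2 * (x ^ 2 + 4 * ν ^ 2) / (4 * (x ^ 2 + 2 * ν ^ 2) ^ 2) := by
  have hpos := sq_sub_sq_pos hν.le hx
  calc debyeRemainder ν x * debyePhase ν x ^ 2
      ≤ debyeRemainder ν x * (√(x ^ 2 - ν ^ 2) ^ 3 / (x ^ 2 + 2 * ν ^ 2)) ^ 2 := by
        gcongr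
        · exact debyeRemainder_nonneg hν.le hx
        · exact (debyePhase_pos hν hx).le
        · exact debyePhase_le hν hx.le
    _ = _ := by
        rw [div_pow, ← pow_mul, mul_comm 3 2, pow_mul, sq_sqrt hpos.le, debyeRemainder]
        field_simp

lemma debyeRemainder_mul_sq_le_quarter (hν : 0 < ν) (hx : ν < x) :
    debyeRemainder ν x * debyePhase ν x ^ 2 ≤ 1 / 4 := by
  refine (debyeRemainder_mul_sq_le hν hx).trans ?_
  rw [div_le_div_iff₀ (by positivity) (by positivity)]
  nlinarith [sq_nonneg (ν ^ 2)]

lemma debyeRemainder_mul_sq_lt (hν : 0 < ν) (hx : ν < x) (hx' : x ^ 2 < 2 * ν ^ 2) :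
    debyeRemainder ν x * debyePhase ν x ^ 2 < 3 / 16 := by
  refine (debyeRemainder_mul_sq_le hν hx).trans_lt ?_
  rw [div_lt_div_iff₀ (by positivity) (by positivity)]
  nlinarith [mul_pos (sub_pos.2 hx') (by positivity : 0 < x ^ 2 + 6 * ν ^ 2)]

lemma tendsto_debyePhase_sub (ν : ℝ) :
    Tendsto (fun x => debyePhase ν x - (x - ν * π / 2)) atTop (𝓝 0) := by
  have harccos : Tendsto (fun x => ν * arccos (ν / x)) atTop (𝓝 (ν * (π / 2))) := by
    have : Tendsto (fun x : ℝ => ν / x) atTop (𝓝 0) := tendsto_const_nhds.div_atTop tendsto_id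
    simpa using (((continuous_arccos.tendsto 0).comp this).const_mul ν)
  have hsqrt : Tendsto (fun x => √(x ^ 2 - ν ^ 2) - x) atTop (𝓝 0) := by
    have : Tendsto (fun x : ℝ => -ν ^ 2 / (√(x ^ 2 - ν ^ 2) + x)) atTop (𝓝 0) :=
      tendsto_const_nhds.div_atTop (tendsto_atTop_mono (fun x => le_add_of_nonneg_left
        (sqrt_nonneg _)) tendsto_id)
    refine this.congr' ?_
    filter_upwards [eventually_gt_atTop |ν|] with x hx
    have hx0 : 0 < x := (abs_nonneg ν).trans_lt hx
    have hsq : √(x ^ 2 - ν ^ 2) ^ 2 = x ^ 2 - ν ^ 2 :=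
      sq_sqrt (sub_nonneg.2 (sq_le_sq.2 (hx.le.trans (le_abs_self x))))
    rw [div_eq_iff (by positivity)]
    linear_combination -hsq
  convert hsqrt.sub (harccos.sub_const (ν * π / 2)) using 1
  · ext x
    rw [debyePhase]
    ring
  · rw [← mul_div_assoc, sub_self, sub_zero]

lemma exists_debyePhase_eq_two_fifths (hν : 2 < ν) :
    ∃ x ∈ Ioo ν (√2 * ν), debyePhase ν x = 2 / 5 := by
  have hν0 : 0 < ν := by linarith
  have hle : ν ≤ √2 * ν := le_mul_of_one_le_left hν0.le (one_le_sqrt.2 one_le_two)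
  refine intermediate_value_Ioo hle ((continuousOn_debyePhase hν0).mono Icc_subset_Ici_self) ?_
  rw [debyePhase_self hν0.ne', debyePhase_sqrt_two_mul hν0]
  constructor
  · norm_num
  · nlinarith [pi_lt_d2]

end DebyePhase

lemma strictAntiOn_gfun : StrictAntiOn gfun (Icc 0 1) := by
  refine strictAntiOn_of_hasDerivWithinAt_neg (f' := fun t => -arccos t / π) (convex_Icc 0 1)
    (by unfold gfun; fun_prop) (fun t ht => ?_) fun t ht => ?_ <;> rw [interior_Icc] at ht
  · have hpos : 0 < 1 - t ^ 2 := by nlinarith [ht.1, ht.2]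
    refine (((((hasDerivAt_pow 2 t).const_sub 1).sqrt hpos.ne').sub
      ((hasDerivAt_id t).mul (hasDerivAt_arccos (by linarith [ht.1]) ht.2.ne))).div_const
        π).congr_deriv ?_ |>.hasDerivWithinAt
    simp only [id]
    field_simp
    ring
  · exact div_neg_of_neg_of_pos (neg_neg_of_pos (arccos_pos.2 ht.2)) pi_pos

lemma gfun_pos {t : ℝ} (ht : t ∈ Ico 0 1) : 0 < gfun t := by
  have hone : gfun 1 = 0 := by simp [gfun]
  simpa [hone] using strictAntiOn_gfun ⟨ht.1, ht.2.le⟩ (right_mem_Icc.2 zero_le_one) ht.2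

lemma sub_mul_debyePhase_le {ν x y : ℝ} (hν : 0 < ν) (hx : ν ≤ x) (hxy : x ≤ y) :
    (y - x) * debyePhase ν y ≤ y * (debyePhase ν y - debyePhase ν x) := by
  have hself := debyePhase_self hν.ne'
  have hdiff : 0 ≤ debyePhase ν y - debyePhase ν x :=
    sub_nonneg.2 ((strictMonoOn_debyePhase hν).monotoneOn hx (hx.trans hxy) hxy)
  have hchord : (y - x) * debyePhase ν y ≤ (y - ν) * (debyePhase ν y - debyePhase ν x) := by
    rcases hx.eq_or_lt with rfl | hνx
    · rw [hself, sub_zero]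
    rcases hxy.eq_or_lt with rfl | hxy
    · simp
    have := (convexOn_debyePhase hν).secant_mono_aux1 self_mem_Ici (hx.trans hxy.le) hνx hxy
    rw [hself] at this
    linarith
  exact hchord.trans (mul_le_mul_of_nonneg_right (by linarith) hdiff)

lemma mul_gfun_le_debyePhase {ν c y : ℝ} (hν : 0 ≤ ν) (hc : 0 < c) (hy : 0 < y)
    (hcy : (1 + c) * ν ≤ y) : π * gfun (1 / (1 + c)) * y ≤ debyePhase ν y := by
  have hle : ν / y ≤ 1 / (1 + c) := by
    rw [div_le_div_iff₀ hy (by linarith)]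
    linarith
  have hone : 1 / (1 + c) ≤ 1 := div_le_one_of_le₀ (by linarith) (by linarith)
  have hanti := strictAntiOn_gfun.antitoneOn ⟨by positivity, hle.trans hone⟩
    ⟨by positivity, hone⟩ hle
  rw [← pi_mul_mul_gfun_div hy, mul_assoc, mul_comm (gfun _)]
  gcongr

/-- `y` solves Bessel's equation `x² y'' + x y' + (x² - ν²) y = 0` on `(0, ∞)`, and `y'` is its
derivative there. -/
structure IsBesselSolution (ν : ℝ) (y y' : ℝ → ℝ) : Prop where
  hasDerivAt : ∀ x > 0, HasDerivAt y (y' x) x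
  hasDerivAt_deriv : ∀ x > 0, HasDerivAt y' (-y' x / x - (1 - ν ^ 2 / x ^ 2) * y x) x

/-- The component `√(x² - ν²) y` of the modified Prüfer pair of a Bessel solution `y`. -/
noncomputable def pruferSin (ν : ℝ) (y : ℝ → ℝ) (x : ℝ) : ℝ := √(x ^ 2 - ν ^ 2) * y x

/-- The component of the modified Prüfer pair of a Bessel solution `y` conjugate to `pruferSin`.
The coefficient of `y` is the one that makes both components grow at the same rate. -/
noncomputable def pruferCos (ν : ℝ) (y y' : ℝ → ℝ) (x : ℝ) : ℝ :=
  x ^ 2 / (2 * (x ^ 2 - ν ^ 2)) * y x + x * y' x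

/-- The squared amplitude of the modified Prüfer pair, with its common growth `√(x² - ν²)`
divided out. -/
noncomputable def pruferAmplitude (ν : ℝ) (y y' : ℝ → ℝ) (x : ℝ) : ℝ :=
  (pruferSin ν y x ^ 2 + pruferCos ν y y' x ^ 2) / √(x ^ 2 - ν ^ 2)

/-- `ψ` is the Prüfer phase of the Bessel solution `y` on `(ν, ∞)`, normalised so that it starts
out between `-π` and `0`. -/
structure IsPruferPhase (ν : ℝ) (y y' ψ : ℝ → ℝ) : Prop where
  hasDerivAt : ∀ x > ν, HasDerivAt ψ
    (√(x ^ 2 - ν ^ 2) / x * (1 + debyeRemainder ν x * sin (ψ x) ^ 2)) x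
  sq_eq : ∀ x > ν, √(x ^ 2 - ν ^ 2) * y x ^ 2 = pruferAmplitude ν y y' x * sin (ψ x) ^ 2
  neg_pi_lt : ∀ x > ν, -π < ψ x
  exists_neg : ∃ x > ν, ψ x < 0

lemma exists_mem_Ioo_mul_cos_eq_mul_sin {A : ℝ} (hA : A ≠ 0) (B : ℝ) :
    ∃ t ∈ Ioo (-π) 0, A * cos t = B * sin t := by
  refine ⟨-(arctan (B / A) + π / 2), ⟨?_, ?_⟩, ?_⟩
  · linarith [arctan_lt_pi_div_two (B / A)]
  · linarith [neg_pi_div_two_lt_arctan (B / A)]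
  · rw [cos_neg, sin_neg, cos_add_pi_div_two, sin_add_pi_div_two, sin_arctan, cos_arctan]
    field_simp

lemma strictMonoOn_of_hasDerivAt_phase {ν : ℝ} {ψ : ℝ → ℝ} (hν : 0 ≤ ν)
    (hψ : ∀ x > ν, HasDerivAt ψ
      (√(x ^ 2 - ν ^ 2) / x * (1 + debyeRemainder ν x * sin (ψ x) ^ 2)) x) :
    StrictMonoOn ψ (Ioi ν) := by
  refine strictMonoOn_of_hasDerivWithinAt_pos (convex_Ioi ν)
    (fun x hx => (hψ x hx).continuousAt.continuousWithinAt)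
    (fun x hx => (hψ x (interior_subset hx)).hasDerivWithinAt) fun x hx => ?_
  have hxν : ν < x := interior_subset hx
  have hx0 : 0 < x := hν.trans_lt hxν
  have hS := sqrt_pos.2 (sq_sub_sq_pos hν hxν)
  have hR := debyeRemainder_nonneg hν hxν
  positivity

namespace IsBesselSolution

open Filter Topology

variable {ν : ℝ} {y y' : ℝ → ℝ} (h : IsBesselSolution ν y y')

include h

lemma hasDerivAt_energy {x : ℝ} (hx : 0 < x) :
    HasDerivAt (fun t => y t ^ 2 + y' t ^ 2)
      (2 * (ν ^ 2 / x ^ 2) * (y x * y' x) - 2 / x * y' x ^ 2) x := by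
  refine (((h.hasDerivAt x hx).pow 2).add ((h.hasDerivAt_deriv x hx).pow 2)).congr_deriv ?_
  push_cast
  ring

lemma antitoneOn_energy_mul_exp :
    AntitoneOn (fun x => (y x ^ 2 + y' x ^ 2) * rexp (ν ^ 2 / x)) (Ioi 0) := by
  have hderiv : ∀ x ∈ Ioi (0 : ℝ), HasDerivAt (fun x => (y x ^ 2 + y' x ^ 2) * rexp (ν ^ 2 / x))
      (-(ν ^ 2 / x ^ 2 * (y x - y' x) ^ 2 + 2 / x * y' x ^ 2) * rexp (ν ^ 2 / x)) x :=
    fun x hx => ((h.hasDerivAt_energy hx).mul ((hasDerivAt_const x (ν ^ 2)).div (hasDerivAt_id x)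
      (ne_of_gt hx)).exp).congr_deriv (by simp only [Pi.div_apply, id]; ring)
  refine antitoneOn_of_hasDerivWithinAt_nonpos (convex_Ioi 0)
    (fun x hx => (hderiv x hx).continuousAt.continuousWithinAt)
    (fun x hx => (hderiv x (interior_subset hx)).hasDerivWithinAt) fun x hx => ?_
  have hx0 : 0 < x := interior_subset hx
  rw [neg_mul, neg_nonpos]
  positivity

lemma monotoneOn_energy_mul_exp :
    MonotoneOn (fun x => (y x ^ 2 + y' x ^ 2) * (x ^ 2 * rexp (-ν ^ 2 / x))) (Ioi 0) := by
  have hderiv : ∀ x ∈ Ioi (0 : ℝ),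
      HasDerivAt (fun x => (y x ^ 2 + y' x ^ 2) * (x ^ 2 * rexp (-ν ^ 2 / x)))
        ((2 * x * y x ^ 2 + ν ^ 2 * (y x + y' x) ^ 2) * rexp (-ν ^ 2 / x)) x := fun x hx => by
    have hx0 : x ≠ 0 := ne_of_gt hx
    refine ((h.hasDerivAt_energy hx).mul ((hasDerivAt_pow 2 x).mul
      ((hasDerivAt_const x (-ν ^ 2)).div (hasDerivAt_id x) hx0).exp)).congr_deriv ?_
    simp only [Pi.mul_apply, Pi.div_apply, id]
    field_simp
    push_cast
    ring
  refine monotoneOn_of_hasDerivWithinAt_nonneg (convex_Ioi 0)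
    (fun x hx => (hderiv x hx).continuousAt.continuousWithinAt)
    (fun x hx => (hderiv x (interior_subset hx)).hasDerivWithinAt) fun x hx => ?_
  have hx0 : 0 < x := interior_subset hx
  positivity

lemma energy_pos (hne : ∃ x > 0, y x ≠ 0) {x : ℝ} (hx : 0 < x) : 0 < y x ^ 2 + y' x ^ 2 := by
  obtain ⟨x₀, hx₀, hy⟩ := hne
  have hpos : 0 < y x₀ ^ 2 + y' x₀ ^ 2 := by positivity
  rcases le_total x x₀ with hle | hle
  · exact pos_of_mul_pos_left ((mul_pos hpos (exp_pos _)).trans_le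
      (h.antitoneOn_energy_mul_exp hx hx₀ hle)) (exp_pos _).le
  · exact pos_of_mul_pos_left ((mul_pos hpos (by positivity)).trans_le
      (h.monotoneOn_energy_mul_exp hx₀ hx hle)) (by positivity)

lemma hasDerivAt_mul_mul_deriv {x : ℝ} (hx : 0 < x) :
    HasDerivAt (fun t => t * (y t * y' t)) (x * y' x ^ 2 + (ν ^ 2 / x - x) * y x ^ 2) x := by
  refine ((hasDerivAt_id x).mul ((h.hasDerivAt x hx).mul (h.hasDerivAt_deriv x hx))).congr_deriv ?_
  simp only [Pi.mul_apply, id]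
  field_simp
  ring

lemma monotoneOn_mul_mul_deriv : MonotoneOn (fun t => t * (y t * y' t)) (Ioc 0 ν) := by
  refine monotoneOn_of_hasDerivWithinAt_nonneg (convex_Ioc 0 ν)
    (fun x hx => (h.hasDerivAt_mul_mul_deriv hx.1).continuousAt.continuousWithinAt)
    (fun x hx => (h.hasDerivAt_mul_mul_deriv (interior_subset hx).1).hasDerivWithinAt)
    fun x hx => ?_
  obtain ⟨hx0, hxν⟩ := interior_subset hx
  have : x ≤ ν ^ 2 / x := (le_div_iff₀ hx0).2 (by nlinarith)
  have := sub_nonneg.2 this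
  positivity

lemma ne_zero_of_mem_Ioc (hne : ∃ x > 0, y x ≠ 0)
    (hlim : Tendsto (fun x => x * (y x * y' x)) (𝓝[>] 0) (𝓝 0)) {x : ℝ} (hx : x ∈ Ioc 0 ν) :
    y x ≠ 0 := by
  intro hyx
  have hnonneg : ∀ t ∈ Ioc 0 ν, 0 ≤ t * (y t * y' t) := fun t ht => by
    refine le_of_tendsto hlim ?_
    filter_upwards [Ioo_mem_nhdsGT ht.1] with u hu
    exact h.monotoneOn_mul_mul_deriv ⟨hu.1, hu.2.le.trans ht.2⟩ ht hu.2.le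
  have hzero : ∀ t ∈ Ioc 0 x, t * (y t * y' t) = 0 := fun t ht => by
    have htν : t ∈ Ioc 0 ν := ⟨ht.1, ht.2.trans hx.2⟩
    have hle := h.monotoneOn_mul_mul_deriv htν hx ht.2
    simp only [hyx, zero_mul, mul_zero] at hle
    exact hle.antisymm (hnonneg t htν)
  set t := x / 2
  have ht : t ∈ Ioo 0 x := ⟨half_pos hx.1, half_lt_self hx.1⟩
  have hderiv : t * y' t ^ 2 + (ν ^ 2 / t - t) * y t ^ 2 = 0 := by
    refine (h.hasDerivAt_mul_mul_deriv ht.1).unique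
      ((hasDerivAt_const t 0).congr_of_eventuallyEq ?_)
    filter_upwards [Ioo_mem_nhds ht.1 ht.2] with u hu
    exact hzero u ⟨hu.1, hu.2.le⟩
  have hcoeff : 0 < ν ^ 2 / t - t := by
    have := ht.2.trans_le hx.2
    rw [sub_pos, lt_div_iff₀ ht.1]
    nlinarith [ht.1]
  have hpos := h.energy_pos hne ht.1
  have hy' : 0 ≤ t * y' t ^ 2 := mul_nonneg ht.1.le (sq_nonneg _)
  have hy : 0 ≤ (ν ^ 2 / t - t) * y t ^ 2 := mul_nonneg hcoeff.le (sq_nonneg _)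
  have hy'0 : y' t ^ 2 = 0 := by nlinarith [ht.1]
  have hy0 : y t ^ 2 = 0 := by nlinarith
  linarith

lemma hasDerivAt_pruferSin {x : ℝ} (hν : 0 ≤ ν) (hx : ν < x) :
    HasDerivAt (pruferSin ν y) (x / (2 * (x ^ 2 - ν ^ 2)) * pruferSin ν y x +
      √(x ^ 2 - ν ^ 2) / x * pruferCos ν y y' x) x := by
  have hx0 : 0 < x := hν.trans_lt hx
  have hpos := sq_sub_sq_pos hν hx
  refine ((hasDerivAt_sqrt_sq_sub_sq hpos).mul (h.hasDerivAt x hx0)).congr_deriv ?_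
  have hS := sqrt_pos.2 hpos
  have hsq := sq_sqrt hpos.le
  rw [pruferSin, pruferCos]
  set S := √(x ^ 2 - ν ^ 2)
  rw [← hsq]
  field_simp
  ring

lemma hasDerivAt_pruferCos {x : ℝ} (hν : 0 ≤ ν) (hx : ν < x) :
    HasDerivAt (pruferCos ν y y') (x / (2 * (x ^ 2 - ν ^ 2)) * pruferCos ν y y' x -
      √(x ^ 2 - ν ^ 2) / x * (1 + debyeRemainder ν x) * pruferSin ν y x) x := by
  have hx0 : 0 < x := hν.trans_lt hx
  have hpos := sq_sub_sq_pos hν hx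
  refine ((((hasDerivAt_pow 2 x).div (((hasDerivAt_pow 2 x).sub_const (ν ^ 2)).const_mul 2)
    (by positivity)).mul (h.hasDerivAt x hx0)).add
      ((hasDerivAt_id x).mul (h.hasDerivAt_deriv x hx0))).congr_deriv ?_
  have hsq := sq_sqrt hpos.le
  rw [pruferSin, pruferCos, debyeRemainder]
  simp only [Pi.div_apply, id]
  field_simp
  rw [hsq]
  push_cast
  ring

lemma prufer_sq_add_sq_pos (hne : ∃ x > 0, y x ≠ 0) {x : ℝ} (hν : 0 ≤ ν) (hx : ν < x) :
    0 < pruferSin ν y x ^ 2 + pruferCos ν y y' x ^ 2 := by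
  have hx0 : 0 < x := hν.trans_lt hx
  have hS := sqrt_pos.2 (sq_sub_sq_pos hν hx)
  by_cases hy : y x = 0
  · have hy' : y' x ≠ 0 := fun hy' => by simpa [hy, hy'] using h.energy_pos hne hx0
    have : pruferCos ν y y' x ≠ 0 := by simp [pruferCos, hy, hy', hx0.ne']
    positivity
  · have : pruferSin ν y x ≠ 0 := mul_ne_zero hS.ne' hy
    positivity

lemma hasDerivAt_pruferAmplitude {x : ℝ} (hν : 0 ≤ ν) (hx : ν < x) :
    HasDerivAt (pruferAmplitude ν y y') (-2 * (debyeRemainder ν x / x) *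
      (pruferSin ν y x * pruferCos ν y y' x)) x := by
  have hx0 : 0 < x := hν.trans_lt hx
  have hpos := sq_sub_sq_pos hν hx
  refine ((((h.hasDerivAt_pruferSin hν hx).pow 2).add ((h.hasDerivAt_pruferCos hν hx).pow 2)).div
    (hasDerivAt_sqrt_sq_sub_sq hpos) (sqrt_pos.2 hpos).ne').congr_deriv ?_
  have hS := sqrt_pos.2 hpos
  have hsq := sq_sqrt hpos.le
  simp only [Pi.add_apply, Pi.pow_apply]
  set S := √(x ^ 2 - ν ^ 2)
  rw [← hsq]
  field_simp
  ring

lemma monotoneOn_pruferAmplitude_mul_exp (hν : 0 < ν) :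
    MonotoneOn (fun x => pruferAmplitude ν y y' x * rexp (-(1 / 4) / debyePhase ν x)) (Ioi ν) := by
  have hderiv : ∀ x ∈ Ioi ν, HasDerivAt
      (fun x => pruferAmplitude ν y y' x * rexp (-(1 / 4) / debyePhase ν x))
      ((-2 * (debyeRemainder ν x / x) * (pruferSin ν y x * pruferCos ν y y' x) +
        (1 / 4) / debyePhase ν x ^ 2 / x * (pruferSin ν y x ^ 2 + pruferCos ν y y' x ^ 2)) *
          rexp (-(1 / 4) / debyePhase ν x)) x := fun x hx => by
    have hx0 : 0 < x := hν.trans hx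
    have hφ := debyePhase_pos hν hx
    have hS := sqrt_pos.2 (sq_sub_sq_pos hν.le hx)
    refine ((h.hasDerivAt_pruferAmplitude hν.le hx).mul ((hasDerivAt_const x (-(1 / 4))).div
      (hasDerivAt_debyePhase hν.le hx) hφ.ne').exp).congr_deriv ?_
    simp only [Pi.div_apply, pruferAmplitude]
    field_simp
    ring
  refine monotoneOn_of_hasDerivWithinAt_nonneg (convex_Ioi ν)
    (fun x hx => (hderiv x hx).continuousAt.continuousWithinAt)
    (fun x hx => (hderiv x (interior_subset hx)).hasDerivWithinAt) fun x hx => ?_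
  have hxν : ν < x := interior_subset hx
  have hx0 : 0 < x := hν.trans hxν
  have hφ := debyePhase_pos hν hxν
  have hR : debyeRemainder ν x ≤ 1 / 4 / debyePhase ν x ^ 2 :=
    (le_div_iff₀ (by positivity)).2 (debyeRemainder_mul_sq_le_quarter hν hxν)
  have hR0 := debyeRemainder_nonneg hν.le hxν
  refine mul_nonneg ?_ (exp_pos _).le
  calc (0 : ℝ) ≤ debyeRemainder ν x / x * (pruferSin ν y x - pruferCos ν y y' x) ^ 2 := by
        positivity
    _ = -2 * (debyeRemainder ν x / x) * (pruferSin ν y x * pruferCos ν y y' x) +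
        debyeRemainder ν x / x * (pruferSin ν y x ^ 2 + pruferCos ν y y' x ^ 2) := by ring
    _ ≤ _ := by gcongr

lemma exists_pos_forall_le_pruferAmplitude (hne : ∃ x > 0, y x ≠ 0) (hν : 0 < ν) {x₁ : ℝ}
    (hx₁ : ν < x₁) : ∃ κ > 0, ∀ x ≥ x₁, κ ≤ pruferAmplitude ν y y' x := by
  have hpos : ∀ x > ν, 0 < pruferAmplitude ν y y' x := fun x hx =>
    div_pos (h.prufer_sq_add_sq_pos hne hν.le hx) (sqrt_pos.2 (sq_sub_sq_pos hν.le hx))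
  refine ⟨_, mul_pos (hpos x₁ hx₁) (exp_pos (-(1 / 4) / debyePhase ν x₁)), fun x hx => ?_⟩
  have hxν : ν < x := hx₁.trans_le hx
  refine (h.monotoneOn_pruferAmplitude_mul_exp hν hx₁ hxν hx).trans
    (mul_le_of_le_one_right (hpos x hxν).le (exp_le_one_iff.2 ?_))
  exact div_nonpos_of_nonpos_of_nonneg (by norm_num) (debyePhase_pos hν hxν).le

lemma exists_phase_of_prufer_eq (hne : ∃ x > 0, y x ≠ 0) (hν : 0 ≤ ν) {x₀ ψ₀ : ℝ} (hx₀ : ν < x₀)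
    (hψ₀ : pruferSin ν y x₀ * cos ψ₀ = pruferCos ν y y' x₀ * sin ψ₀) :
    ∃ ψ : ℝ → ℝ, ψ x₀ = ψ₀ ∧
      (∀ x > ν, HasDerivAt ψ
        (√(x ^ 2 - ν ^ 2) / x * (1 + debyeRemainder ν x * sin (ψ x) ^ 2)) x) ∧
      ∀ x > ν, √(x ^ 2 - ν ^ 2) * y x ^ 2 = pruferAmplitude ν y y' x * sin (ψ x) ^ 2 := by
  have hrate : ContinuousOn (fun x => x / (2 * (x ^ 2 - ν ^ 2))) (Ioi ν) :=
    continuousOn_id.div (by fun_prop) fun x hx => by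
      have := sq_sub_sq_pos hν hx; positivity
  have hspeed : ContinuousOn (fun x => √(x ^ 2 - ν ^ 2) / x) (Ioi ν) :=
    ContinuousOn.div (by fun_prop) continuousOn_id fun x hx => (hν.trans_lt hx).ne'
  have hremainder : ContinuousOn (debyeRemainder ν) (Ioi ν) :=
    ContinuousOn.div (by fun_prop) (by fun_prop) fun x hx => by
      have := sq_sub_sq_pos hν hx; positivity
  obtain ⟨ψ, hψx₀, hψ, hsin⟩ := exists_prufer_phase isOpen_Ioi ordConnected_Ioi hrate hspeed
    hremainder (fun x hx => h.hasDerivAt_pruferSin hν hx)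
    (fun x hx => h.hasDerivAt_pruferCos hν hx)
    (fun x hx => (h.prufer_sq_add_sq_pos hne hν hx).ne') hx₀ hψ₀
  refine ⟨ψ, hψx₀, hψ, fun x hx => ?_⟩
  have hS := sqrt_pos.2 (sq_sub_sq_pos hν hx)
  rw [pruferAmplitude, div_mul_eq_mul_div, ← hsin x hx, pruferSin, eq_div_iff hS.ne']
  ring

lemma exists_isPruferPhase (hν : 0 < ν) (hyν : y ν ≠ 0) : ∃ ψ, IsPruferPhase ν y y' ψ := by
  have hne : ∃ x > 0, y x ≠ 0 := ⟨ν, hν, hyν⟩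
  obtain ⟨x₀, hx₀, hyx₀⟩ : ∃ x₀ ∈ Ioi ν, Ioc ν x₀ ⊆ {x | y x ≠ 0} :=
    mem_nhdsGT_iff_exists_Ioc_subset.1
      (nhdsWithin_le_nhds ((h.hasDerivAt ν hν).continuousAt.eventually_ne hyν))
  have hA : pruferSin ν y x₀ ≠ 0 :=
    mul_ne_zero (sqrt_pos.2 (sq_sub_sq_pos hν.le hx₀)).ne' (hyx₀ (right_mem_Ioc.2 hx₀))
  obtain ⟨ψ₀, hψ₀, heq⟩ := exists_mem_Ioo_mul_cos_eq_mul_sin hA (pruferCos ν y y' x₀)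
  obtain ⟨ψ, hψx₀, hψ, hsq⟩ := h.exists_phase_of_prufer_eq hne hν.le hx₀ heq
  refine ⟨ψ, hψ, hsq, fun x hx => ?_, x₀, hx₀, hψx₀.trans_lt hψ₀.2⟩
  rcases le_or_gt x₀ x with hle | hlt
  · exact (hψ₀.1.trans_eq hψx₀.symm).trans_le
      ((strictMonoOn_of_hasDerivAt_phase hν.le hψ).monotoneOn hx₀ hx hle)
  · by_contra! hψx
    have hcont : ContinuousOn ψ (Icc x x₀) := fun t ht =>
      (hψ t (hx.trans_le ht.1)).continuousAt.continuousWithinAt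
    obtain ⟨t, ht, htπ⟩ := intermediate_value_Icc hlt.le hcont ⟨hψx, (hψ₀.1.trans_eq hψx₀.symm).le⟩
    have htν : ν < t := hx.trans_le ht.1
    have hzero : √(t ^ 2 - ν ^ 2) * y t ^ 2 = 0 := by simp [hsq t htν, htπ]
    have hS := (sqrt_pos.2 (sq_sub_sq_pos hν.le htν)).ne'
    exact hyx₀ ⟨htν, ht.2⟩ (by simpa [hS] using hzero)

end IsBesselSolution

/-- The `n`-th derivative in `x` of the integral `∫₀^π cos (x sin θ - ν θ) dθ`. -/
noncomputable def angularMoment (ν : ℝ) (n : ℕ) (x : ℝ) : ℝ :=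
  ∫ θ in (0 : ℝ)..π, sin θ ^ n * cos (x * sin θ - ν * θ + n * (π / 2))

/-- The integral `∫₀^∞ sinhⁿ t e^{-x sinh t - ν t} dt`; up to the sign `(-1)ⁿ` it is the `n`-th
derivative in `x` of the second integral in the definition of `besselJ`. -/
noncomputable def sinhMoment (ν : ℝ) (n : ℕ) (x : ℝ) : ℝ :=
  ∫ t in Ioi (0 : ℝ), sinh t ^ n * rexp (-x * sinh t - ν * t)

/-- The derivative of `besselJ ν`, for `ν > 1`. -/
noncomputable def besselJDeriv (ν x : ℝ) : ℝ :=
  1 / π * angularMoment ν 1 x + sin (ν * π) / π * sinhMoment ν 1 x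

section BesselIntegrals

open Filter Topology

variable {ν x : ℝ} {n : ℕ}

lemma besselJ_eq_moments (ν x : ℝ) :
    besselJ ν x = 1 / π * angularMoment ν 0 x - sin (ν * π) / π * sinhMoment ν 0 x := by
  simp [besselJ, angularMoment, sinhMoment]

lemma abs_angularMoment_le (ν : ℝ) (n : ℕ) (x : ℝ) : |angularMoment ν n x| ≤ π := by
  have hbound : ∀ θ ∈ uIoc 0 π, ‖sin θ ^ n * cos (x * sin θ - ν * θ + n * (π / 2))‖ ≤ 1 :=
    fun θ _ => by
      rw [norm_mul, norm_pow]
      exact mul_le_one₀ (pow_le_one₀ (norm_nonneg _) (abs_sin_le_one _)) (norm_nonneg _)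
        (abs_cos_le_one _)
  simpa [angularMoment, abs_of_pos pi_pos] using
    intervalIntegral.norm_integral_le_of_norm_le_const hbound

lemma hasDerivAt_angularMoment (ν : ℝ) (n : ℕ) (x : ℝ) :
    HasDerivAt (angularMoment ν n) (angularMoment ν (n + 1) x) x := by
  have hderiv : ∀ θ y : ℝ, HasDerivAt (fun y => sin θ ^ n * cos (y * sin θ - ν * θ + n * (π / 2)))
      (sin θ ^ (n + 1) * cos (y * sin θ - ν * θ + (n + 1 : ℕ) * (π / 2))) y := fun θ y => by
    refine (((((hasDerivAt_id y).mul_const (sin θ)).sub_const (ν * θ)).add_const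
      (n * (π / 2))).cos.const_mul (sin θ ^ n)).congr_deriv ?_
    push_cast
    rw [add_one_mul (n : ℝ), ← add_assoc, cos_add_pi_div_two]
    simp only [id]
    ring
  refine (intervalIntegral.hasDerivAt_integral_of_dominated_loc_of_deriv_le (μ := volume)
    (bound := fun _ => 1) univ_mem (Eventually.of_forall fun y => ?_) ?_ ?_
    (Eventually.of_forall fun θ _ y _ => ?_) intervalIntegrable_const
    (Eventually.of_forall fun θ _ y _ => hderiv θ y)).2
  · exact Continuous.aestronglyMeasurable (by fun_prop)
  · exact Continuous.intervalIntegrable (by fun_prop) _ _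
  · exact Continuous.aestronglyMeasurable (by fun_prop)
  · rw [norm_mul, norm_pow]
    exact mul_le_one₀ (pow_le_one₀ (norm_nonneg _) (abs_sin_le_one _)) (norm_nonneg _)
      (abs_cos_le_one _)

lemma sinh_le_exp (t : ℝ) : sinh t ≤ rexp t := by
  rw [← cosh_add_sinh]
  linarith [cosh_pos t]

lemma norm_sinh_pow_mul_exp_le (hx : 0 ≤ x) {t : ℝ} (ht : 0 ≤ t) :
    ‖sinh t ^ n * rexp (-x * sinh t - ν * t)‖ ≤ rexp ((n - ν) * t) := by
  have hsinh : 0 ≤ sinh t := sinh_nonneg_iff.2 ht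
  rw [norm_of_nonneg (by positivity)]
  calc sinh t ^ n * rexp (-x * sinh t - ν * t) ≤ rexp t ^ n * rexp (-ν * t) := by
        gcongr
        · exact sinh_le_exp t
        · nlinarith
    _ = rexp ((n - ν) * t) := by rw [← exp_nat_mul, ← exp_add]; ring_nf

lemma integrableOn_sinh_pow_mul_exp (hn : n < ν) (hx : 0 ≤ x) :
    IntegrableOn (fun t => sinh t ^ n * rexp (-x * sinh t - ν * t)) (Ioi 0) := by
  refine (integrableOn_exp_mul_Ioi (sub_neg.2 hn) 0).mono'
    (Continuous.aestronglyMeasurable (by fun_prop)) ?_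
  filter_upwards [ae_restrict_mem measurableSet_Ioi] with t ht
  exact norm_sinh_pow_mul_exp_le hx (le_of_lt ht)

lemma abs_sinhMoment_le (hn : n < ν) (hx : 0 ≤ x) : |sinhMoment ν n x| ≤ 1 / (ν - n) := by
  calc |sinhMoment ν n x| ≤ ∫ t in Ioi (0 : ℝ), rexp ((n - ν) * t) := by
        rw [sinhMoment, ← Real.norm_eq_abs]
        refine norm_integral_le_of_norm_le (integrableOn_exp_mul_Ioi (sub_neg.2 hn) 0) ?_
        filter_upwards [ae_restrict_mem measurableSet_Ioi] with t ht
        exact norm_sinh_pow_mul_exp_le hx (le_of_lt ht)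
    _ = 1 / (ν - n) := by
        rw [integral_exp_mul_Ioi (sub_neg.2 hn), mul_zero, exp_zero, neg_div, ← div_neg, neg_sub]

lemma hasDerivAt_sinhMoment (hn : n + 1 < ν) (hx : 0 < x) :
    HasDerivAt (sinhMoment ν n) (-sinhMoment ν (n + 1) x) x := by
  have hderiv : ∀ t y : ℝ, HasDerivAt (fun y => sinh t ^ n * rexp (-y * sinh t - ν * t))
      (-(sinh t ^ (n + 1) * rexp (-y * sinh t - ν * t))) y := fun t y => by
    refine ((((hasDerivAt_id y).neg.mul_const (sinh t)).sub_const (ν * t)).exp.const_mul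
      (sinh t ^ n)).congr_deriv ?_
    simp only [Pi.neg_apply, id]
    ring
  have hint : Integrable (fun t => rexp (((n + 1 : ℕ) - ν) * t)) (volume.restrict (Ioi 0)) :=
    integrableOn_exp_mul_Ioi (by push_cast; linarith) 0
  refine ((hasDerivAt_integral_of_dominated_loc_of_deriv_le (Ioi_mem_nhds hx)
    (Eventually.of_forall fun y => ?_)
    (integrableOn_sinh_pow_mul_exp (by linarith : (n : ℝ) < ν) hx.le).integrable ?_ ?_ hint
    (Eventually.of_forall fun t y _ => hderiv t y)).2).congr_deriv (integral_neg _)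
  · exact Continuous.aestronglyMeasurable (by fun_prop)
  · exact Continuous.aestronglyMeasurable (by fun_prop)
  · filter_upwards [ae_restrict_mem measurableSet_Ioi] with t ht y hy
    rw [norm_neg]
    exact norm_sinh_pow_mul_exp_le (le_of_lt hy) (le_of_lt ht)

lemma angularMoment_recurrence (ν x : ℝ) :
    x ^ 2 * angularMoment ν 2 x + x * angularMoment ν 1 x + (x ^ 2 - ν ^ 2) * angularMoment ν 0 x =
      (x - ν) * sin (ν * π) := by
  have hderiv : ∀ θ ∈ uIcc 0 π, HasDerivAt (fun θ => (x * cos θ + ν) * sin (x * sin θ - ν * θ))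
      (x ^ 2 * (sin θ ^ 2 * cos (x * sin θ - ν * θ + (2 : ℕ) * (π / 2))) +
        x * (sin θ ^ 1 * cos (x * sin θ - ν * θ + (1 : ℕ) * (π / 2))) +
        (x ^ 2 - ν ^ 2) * (sin θ ^ 0 * cos (x * sin θ - ν * θ + (0 : ℕ) * (π / 2)))) θ :=
    fun θ _ => by
      refine ((((hasDerivAt_cos θ).const_mul x).add_const ν).mul (((hasDerivAt_sin θ).const_mul
        x).sub ((hasDerivAt_id θ).const_mul ν)).sin).congr_deriv ?_
      simp only [Nat.cast_ofNat, Nat.cast_one, Nat.cast_zero, zero_mul, add_zero, one_mul,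
        mul_div_cancel₀ π two_ne_zero, cos_add_pi, cos_add_pi_div_two, Pi.sub_apply, id]
      linear_combination x ^ 2 * cos (x * sin θ - ν * θ) * sin_sq_add_cos_sq θ
  have hint : ∀ n : ℕ, IntervalIntegrable
      (fun θ => sin θ ^ n * cos (x * sin θ - ν * θ + n * (π / 2))) volume 0 π :=
    fun n => Continuous.intervalIntegrable (by fun_prop) _ _
  have hftc := intervalIntegral.integral_eq_sub_of_hasDerivAt hderiv
    ((((hint 2).const_mul _).add ((hint 1).const_mul _)).add ((hint 0).const_mul _))
  rw [intervalIntegral.integral_add (((hint 2).const_mul _).add ((hint 1).const_mul _))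
      ((hint 0).const_mul _),
    intervalIntegral.integral_add ((hint 2).const_mul _) ((hint 1).const_mul _)] at hftc
  simp only [intervalIntegral.integral_const_mul] at hftc
  simp only [angularMoment, hftc, cos_pi, sin_pi, sin_zero, mul_zero, zero_sub, sub_zero, sin_neg]
  ring

lemma tendsto_cosh_mul_exp_atTop (hν : 1 < ν) (hx : 0 ≤ x) :
    Tendsto (fun t => -(x * cosh t - ν) * rexp (-x * sinh t - ν * t)) atTop (𝓝 0) := by
  have hexp : Tendsto (fun t => (x + ν) * rexp ((1 - ν) * t)) atTop (𝓝 0) := by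
    simpa using (tendsto_exp_atBot.comp
      (tendsto_id.const_mul_atTop_of_neg (sub_neg.2 hν))).const_mul (x + ν)
  refine squeeze_zero_norm' ?_ hexp
  filter_upwards [eventually_ge_atTop 0] with t ht
  have hsinh : 0 ≤ sinh t := sinh_nonneg_iff.2 ht
  have hcosh : cosh t ≤ rexp t := by rw [← cosh_add_sinh]; linarith
  have hfactor : |x * cosh t - ν| ≤ (x + ν) * rexp t := by
    have hone : 1 ≤ rexp t := one_le_exp ht
    rw [abs_le]
    constructor <;> nlinarith [cosh_pos t]
  rw [norm_mul, norm_neg, Real.norm_eq_abs, norm_of_nonneg (exp_pos _).le]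
  calc |x * cosh t - ν| * rexp (-x * sinh t - ν * t) ≤ (x + ν) * rexp t * rexp (-ν * t) := by
        gcongr
        nlinarith
    _ = (x + ν) * rexp ((1 - ν) * t) := by rw [mul_assoc, ← exp_add]; ring_nf

lemma sinhMoment_recurrence (hν : 2 < ν) (hx : 0 ≤ x) :
    x ^ 2 * sinhMoment ν 2 x - x * sinhMoment ν 1 x + (x ^ 2 - ν ^ 2) * sinhMoment ν 0 x =
      x - ν := by
  have hderiv : ∀ t ∈ Ioi (0 : ℝ),
      HasDerivAt (fun t => -(x * cosh t - ν) * rexp (-x * sinh t - ν * t))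
        (x ^ 2 * (sinh t ^ 2 * rexp (-x * sinh t - ν * t)) -
          x * (sinh t ^ 1 * rexp (-x * sinh t - ν * t)) +
          (x ^ 2 - ν ^ 2) * (sinh t ^ 0 * rexp (-x * sinh t - ν * t))) t := fun t _ => by
    refine ((((hasDerivAt_cosh t).const_mul x).sub_const ν).neg.mul (((hasDerivAt_sinh t).const_mul
      (-x)).sub ((hasDerivAt_id t).const_mul ν)).exp).congr_deriv ?_
    simp only [Pi.sub_apply, Pi.neg_apply, id]
    linear_combination x ^ 2 * rexp (-x * sinh t - ν * t) * cosh_sq t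
  have h2 := (integrableOn_sinh_pow_mul_exp (n := 2) hν hx).const_mul (x ^ 2)
  have h1 := (integrableOn_sinh_pow_mul_exp (ν := ν) (n := 1) (by push_cast; linarith) hx).const_mul
    x
  have h0 := (integrableOn_sinh_pow_mul_exp (ν := ν) (n := 0) (by push_cast; linarith) hx).const_mul
    (x ^ 2 - ν ^ 2)
  have hftc := (integral_add (h2.sub h1) h0).symm.trans
    (integral_Ioi_of_hasDerivAt_of_tendsto (by fun_prop) hderiv ((h2.sub h1).add h0)
      (tendsto_cosh_mul_exp_atTop (by linarith) hx))
  rw [integral_sub' h2 h1] at hftc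
  simpa [sinhMoment, integral_const_mul] using hftc

lemma isBesselSolution_besselJ (hν : 2 < ν) :
    IsBesselSolution ν (besselJ ν) (besselJDeriv ν) where
  hasDerivAt x hx := by
    rw [funext (besselJ_eq_moments ν)]
    refine (((hasDerivAt_angularMoment ν 0 x).const_mul (1 / π)).sub
      ((hasDerivAt_sinhMoment (n := 0) (by push_cast; linarith) hx).const_mul
        (sin (ν * π) / π))).congr_deriv ?_
    rw [besselJDeriv]
    ring
  hasDerivAt_deriv x hx := by
    refine (((hasDerivAt_angularMoment ν 1 x).const_mul (1 / π)).add
      ((hasDerivAt_sinhMoment (n := 1) (by push_cast; linarith) hx).const_mul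
        (sin (ν * π) / π))).congr_deriv ?_
    have hx0 : x ≠ 0 := ne_of_gt hx
    have hangular := angularMoment_recurrence ν x
    have hsinh := sinhMoment_recurrence hν (le_of_lt hx)
    rw [besselJDeriv, besselJ_eq_moments]
    generalize sin (ν * π) = σ at hangular ⊢
    field_simp
    linear_combination hangular - σ * hsinh

lemma abs_sin_div_pi_mul_sinhMoment_le_one (hn : n + 1 ≤ ν) (hx : 0 ≤ x) (a : ℝ) :
    |sin a / π * sinhMoment ν n x| ≤ 1 := by
  have hcoeff : |sin a / π| ≤ 1 := by
    rw [abs_div, abs_of_pos pi_pos]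
    exact div_le_one_of_le₀ ((abs_sin_le_one a).trans (by linarith [pi_gt_three])) pi_pos.le
  have hmoment : |sinhMoment ν n x| ≤ 1 := (abs_sinhMoment_le (by linarith) hx).trans
    (div_le_one_of_le₀ (by linarith) (by linarith))
  rw [abs_mul]
  exact mul_le_one₀ hcoeff (abs_nonneg _) hmoment

lemma abs_angularMoment_div_pi_le_one (ν : ℝ) (n : ℕ) (x : ℝ) :
    |1 / π * angularMoment ν n x| ≤ 1 := by
  rw [one_div_mul_eq_div, abs_div, abs_of_pos pi_pos]
  exact div_le_one_of_le₀ (abs_angularMoment_le ν n x) pi_pos.le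

lemma abs_besselJ_le_two (hν : 1 ≤ ν) (hx : 0 ≤ x) : |besselJ ν x| ≤ 2 := by
  rw [besselJ_eq_moments]
  refine (abs_sub _ _).trans ?_
  linarith [abs_angularMoment_div_pi_le_one ν 0 x,
    abs_sin_div_pi_mul_sinhMoment_le_one (n := 0) (by simpa using hν) hx (ν * π)]

lemma abs_besselJDeriv_le_two (hν : 2 ≤ ν) (hx : 0 ≤ x) : |besselJDeriv ν x| ≤ 2 := by
  refine (abs_add_le _ _).trans ?_
  linarith [abs_angularMoment_div_pi_le_one ν 1 x,
    abs_sin_div_pi_mul_sinhMoment_le_one (ν := ν) (n := 1) (by push_cast; linarith) hx (ν * π)]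

lemma tendsto_mul_besselJ_mul_besselJDeriv (hν : 2 ≤ ν) :
    Tendsto (fun x => x * (besselJ ν x * besselJDeriv ν x)) (𝓝[>] 0) (𝓝 0) := by
  have hlin : Tendsto (fun x : ℝ => x * (2 * 2)) (𝓝[>] 0) (𝓝 0) :=
    tendsto_nhdsWithin_of_tendsto_nhds (Continuous.tendsto' (by fun_prop) _ _ (by simp))
  refine squeeze_zero_norm' ?_ hlin
  filter_upwards [self_mem_nhdsWithin] with x (hx : 0 < x)
  rw [norm_mul, norm_mul, norm_of_nonneg hx.le]
  gcongr
  · exact abs_besselJ_le_two (by linarith) hx.le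
  · exact abs_besselJDeriv_le_two hν hx.le

end BesselIntegrals

section BesselAsymptotics

open Complex Filter Topology

variable {ν x : ℝ}

lemma angularMoment_zero_eq (ν x : ℝ) : angularMoment ν 0 x =
    2 * ∫ α in (0 : ℝ)..π / 2, Real.cos (x * Real.cos α - ν * π / 2) * Real.cos (ν * α) := by
  set f : ℝ → ℝ := fun α => Real.cos (x * Real.cos α - ν * π / 2 - ν * α)
  have hshift : angularMoment ν 0 x = ∫ α in -(π / 2)..π / 2, f α := by
    have := intervalIntegral.integral_comp_sub_right f (π / 2) (a := 0) (b := π)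
    rw [zero_sub, sub_half] at this
    rw [← this, angularMoment]
    refine intervalIntegral.integral_congr fun θ _ => ?_
    simp only [f, Real.cos_sub_pi_div_two, pow_zero, one_mul, Nat.cast_zero, zero_mul, add_zero]
    ring_nf
  have hint : ∀ a b, IntervalIntegrable f volume a b := fun a b =>
    Continuous.intervalIntegrable (by fun_prop) a b
  have hreflect : ∫ α in -(π / 2)..0, f α = ∫ α in (0 : ℝ)..π / 2, f (-α) := by simp
  have hreflect_int : IntervalIntegrable (fun α => f (-α)) volume 0 (π / 2) :=
    Continuous.intervalIntegrable (by fun_prop) _ _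
  rw [hshift, ← intervalIntegral.integral_add_adjacent_intervals (hint _ 0) (hint 0 _), hreflect,
    ← intervalIntegral.integral_add hreflect_int (hint _ _), ← intervalIntegral.integral_const_mul]
  refine intervalIntegral.integral_congr fun α _ => ?_
  simp only [f, mul_neg, Real.cos_sub _ (ν * α), Real.cos_sub _ (-(ν * α)), Real.cos_neg,
    Real.sin_neg]
  ring

lemma tendsto_mul_integral_cos_mul_cexp (ν : ℝ) :
    Tendsto (fun r : ℝ => (r : ℂ) * ∫ α in (0 : ℝ)..π / 2,
      Real.cos (ν * α) * cexp (-(I / 2) * ((r * (2 * Real.sin (α / 2)) : ℝ) : ℂ) ^ 2)) atTop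
      (𝓝 (√(π / 2) * cexp (-(π / 4 : ℝ) * I))) := by
  have hcos : ∀ α ∈ Icc 0 (π / 2), Real.cos (α / 2) ≠ 0 := fun α hα =>
    (Real.cos_pos_of_mem_Ioo ⟨by linarith [hα.1, pi_pos], by linarith [hα.2, pi_pos]⟩).ne'
  have hs : ∀ α ∈ Icc 0 (π / 2), HasDerivAt (fun α => 2 * Real.sin (α / 2)) (Real.cos (α / 2)) α :=
    fun α _ => (((hasDerivAt_id α).div_const 2).sin.const_mul 2).congr_deriv (by simp; ring)
  have hpos : ∀ α ∈ Ioc 0 (π / 2), 0 < 2 * Real.sin (α / 2) := fun α hα =>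
    mul_pos two_pos (Real.sin_pos_of_pos_of_lt_pi (by linarith [hα.1]) (by linarith [hα.2, pi_pos]))
  have hh : ∀ α ∈ Icc 0 (π / 2), HasDerivAt
      (fun α => ((Real.cos (ν * α) / Real.cos (α / 2) : ℝ) : ℂ))
      (((-Real.sin (ν * α) * ν * Real.cos (α / 2) + Real.cos (ν * α) * (Real.sin (α / 2) / 2)) /
        Real.cos (α / 2) ^ 2 : ℝ) : ℂ) α := fun α hα =>
    ((((hasDerivAt_id α).const_mul ν).cos.div ((hasDerivAt_id α).div_const 2).cos
      (hcos α hα)).congr_deriv (by simp; ring)).ofReal_comp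
  have hh' : ContinuousOn (fun α => (((-Real.sin (ν * α) * ν * Real.cos (α / 2) +
      Real.cos (ν * α) * (Real.sin (α / 2) / 2)) / Real.cos (α / 2) ^ 2 : ℝ) : ℂ))
      (Icc 0 (π / 2)) :=
    continuous_ofReal.comp_continuousOn (ContinuousOn.div (by fun_prop) (by fun_prop)
      fun α hα => pow_ne_zero 2 (hcos α hα))
  have hlim := tendsto_integral_stationary_phase (by fun_prop) tendsto_fresnel_integral
    (by positivity) hs (by fun_prop) (by simp) hpos hh hh'
  simp only [mul_zero, zero_div, Real.cos_zero, div_one, ofReal_one, one_mul] at hlim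
  refine hlim.congr fun r => ?_
  rw [← intervalIntegral.integral_const_mul]
  refine intervalIntegral.integral_congr fun α hα => ?_
  rw [uIcc_of_le (by positivity)] at hα
  have hne : (Real.cos (α / 2) : ℂ) ≠ 0 := ofReal_ne_zero.2 (hcos α hα)
  simp only [real_smul, ofReal_mul, ofReal_div]
  field_simp

lemma cos_mul_cos_sub_eq_re (hx : 0 ≤ x) (α β : ℝ) :
    Real.cos (x * Real.cos α - β) = (cexp ((x - β : ℝ) * I) *
      cexp (-(I / 2) * ((√x * (2 * Real.sin (α / 2)) : ℝ) : ℂ) ^ 2)).re := by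
  have hcos : Real.cos α = 1 - 2 * Real.sin (α / 2) ^ 2 := by
    rw [← Real.cos_two_mul_eq_one_sub, mul_div_cancel₀ α two_ne_zero]
  have hphase : ((x - β : ℝ) : ℂ) * I + -(I / 2) * ((√x * (2 * Real.sin (α / 2)) : ℝ) : ℂ) ^ 2 =
      (x * Real.cos α - β : ℝ) * I := by
    rw [← ofReal_pow, mul_pow, Real.sq_sqrt hx, hcos]
    push_cast
    ring
  rw [← Complex.exp_add, hphase, exp_ofReal_mul_I_re]

lemma sqrt_mul_angularMoment_eq_re (ν : ℝ) (hx : 0 ≤ x) :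
    √x * angularMoment ν 0 x = 2 * (cexp ((x - ν * π / 2 : ℝ) * I) * (√x * ∫ α in (0 : ℝ)..π / 2,
      Real.cos (ν * α) * cexp (-(I / 2) * ((√x * (2 * Real.sin (α / 2)) : ℝ) : ℂ) ^ 2))).re := by
  have hint : IntervalIntegrable (fun α : ℝ => cexp ((x - ν * π / 2 : ℝ) * I) *
      (Real.cos (ν * α) * cexp (-(I / 2) * ((√x * (2 * Real.sin (α / 2)) : ℝ) : ℂ) ^ 2)))
      volume 0 (π / 2) :=
    Continuous.intervalIntegrable (by fun_prop) _ _
  rw [mul_left_comm (cexp _), re_ofReal_mul, ← intervalIntegral.integral_const_mul,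
    ← reCLM_apply, ← reCLM.intervalIntegral_comp_comm hint, angularMoment_zero_eq, mul_left_comm]
  congr 2
  refine intervalIntegral.integral_congr fun α _ => ?_
  rw [reCLM_apply, mul_left_comm, re_ofReal_mul, ← cos_mul_cos_sub_eq_re hx, mul_comm]

lemma tendsto_sqrt_mul_angularMoment_sub (ν : ℝ) :
    Tendsto (fun x => √x * angularMoment ν 0 x - 2 * √(π / 2) * Real.cos (x - ν * π / 2 - π / 4))
      atTop (𝓝 0) := by
  set G : ℝ → ℂ := fun r => r * ∫ α in (0 : ℝ)..π / 2,
    Real.cos (ν * α) * cexp (-(I / 2) * ((r * (2 * Real.sin (α / 2)) : ℝ) : ℂ) ^ 2)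
  set l : ℂ := √(π / 2) * cexp (-(π / 4 : ℝ) * I)
  have hG : Tendsto (fun x => 2 * ‖G √x - l‖) atTop (𝓝 0) := by
    have hG : Tendsto (fun x => G √x) atTop (𝓝 l) :=
      (tendsto_mul_integral_cos_mul_cexp ν).comp Real.tendsto_sqrt_atTop
    simpa only [mul_zero] using (tendsto_iff_norm_sub_tendsto_zero.1 hG).const_mul 2
  refine squeeze_zero_norm' ?_ hG
  filter_upwards [eventually_ge_atTop 0] with x hx
  set β := ν * π / 2
  have hmoment : √x * angularMoment ν 0 x = 2 * (cexp ((x - β : ℝ) * I) * G √x).re :=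
    sqrt_mul_angularMoment_eq_re ν hx
  have hmain : √(π / 2) * Real.cos (x - β - π / 4) = (cexp ((x - β : ℝ) * I) * l).re := by
    rw [mul_left_comm, re_ofReal_mul, ← Complex.exp_add, ← exp_ofReal_mul_I_re]
    congr 3
    push_cast
    ring
  calc ‖√x * angularMoment ν 0 x - 2 * √(π / 2) * Real.cos (x - β - π / 4)‖
      = 2 * |(cexp ((x - β : ℝ) * I) * (G √x - l)).re| := by
        rw [mul_assoc, hmoment, hmain, ← mul_sub, ← sub_re, ← mul_sub, norm_mul, Real.norm_two,
          Real.norm_eq_abs]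
    _ ≤ 2 * ‖cexp ((x - β : ℝ) * I) * (G √x - l)‖ := by gcongr; exact abs_re_le_norm _
    _ = 2 * ‖G √x - l‖ := by rw [norm_mul, norm_exp_ofReal_mul_I, one_mul]

lemma sinhMoment_zero_nonneg (ν x : ℝ) : 0 ≤ sinhMoment ν 0 x :=
  integral_nonneg fun t => by positivity

lemma sinhMoment_zero_le (hν : 0 ≤ ν) (hx : 0 < x) : sinhMoment ν 0 x ≤ 1 / x := by
  calc sinhMoment ν 0 x ≤ ∫ t in Ioi (0 : ℝ), rexp (-x * t) := by
        refine integral_mono_of_nonneg (Eventually.of_forall fun t => by positivity)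
          (integrableOn_exp_mul_Ioi (by linarith) 0) ?_
        filter_upwards [ae_restrict_mem measurableSet_Ioi] with t (ht : 0 < t)
        rw [pow_zero, one_mul, Real.exp_le_exp]
        nlinarith [Real.self_le_sinh_iff.2 ht.le]
    _ = 1 / x := by rw [integral_exp_mul_Ioi (neg_neg_of_pos hx)]; simp

lemma tendsto_sqrt_mul_besselJ_sub (hν : 0 ≤ ν) :
    Tendsto (fun x => √x * besselJ ν x - √(2 / π) * Real.cos (x - ν * π / 2 - π / 4))
      atTop (𝓝 0) := by
  have hcoeff : √(2 / π) = 2 * √(π / 2) / π := by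
    rw [← Real.sqrt_sq (by positivity : 0 ≤ 2 * √(π / 2) / π), div_pow, mul_pow,
      Real.sq_sqrt (by positivity)]
    congr 1
    field_simp
  have hsinh : Tendsto (fun x => √x * sinhMoment ν 0 x) atTop (𝓝 0) := by
    refine squeeze_zero' (g := fun x => 1 / √x)
      (Eventually.of_forall fun x => mul_nonneg (Real.sqrt_nonneg x) (sinhMoment_zero_nonneg ν x))
      ?_ (tendsto_const_nhds.div_atTop Real.tendsto_sqrt_atTop)
    filter_upwards [eventually_gt_atTop 0] with x hx
    refine (mul_le_mul_of_nonneg_left (sinhMoment_zero_le hν hx) (Real.sqrt_nonneg x)).trans_eq ?_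
    rw [mul_one_div, Real.sqrt_div_self']
  have hlim := ((tendsto_sqrt_mul_angularMoment_sub ν).const_mul (1 / π)).sub
    (hsinh.const_mul (Real.sin (ν * π) / π))
  rw [mul_zero, mul_zero, sub_zero] at hlim
  refine hlim.congr fun x => ?_
  rw [besselJ_eq_moments, hcoeff]
  ring

end BesselAsymptotics

namespace IsPruferPhase

open Filter Topology

variable {ν x : ℝ} {y y' ψ : ℝ → ℝ} (h : IsPruferPhase ν y y' ψ)

include h

lemma strictMonoOn (hν : 0 ≤ ν) : StrictMonoOn ψ (Ioi ν) :=
  strictMonoOn_of_hasDerivAt_phase hν h.hasDerivAt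

lemma exists_tendsto_sub_debyePhase (hν : 0 < ν) :
    ∃ L, Tendsto (fun x => ψ x - debyePhase ν x) atTop (𝓝 L) ∧
      ∀ x > ν, L ∈ Icc (ψ x - debyePhase ν x)
        (ψ x - debyePhase ν x + 1 / 4 / debyePhase ν x) := by
  have hφ : ∀ x > ν, HasDerivAt (debyePhase ν) (√(x ^ 2 - ν ^ 2) / x) x :=
    fun x hx => hasDerivAt_debyePhase hν.le hx
  have hp : ∀ x > ν, 0 ≤ √(x ^ 2 - ν ^ 2) / x := fun x hx =>
    div_nonneg (sqrt_nonneg _) (hν.trans hx).le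
  have hpos : ∀ x > ν, 0 < debyePhase ν x := fun x hx => debyePhase_pos hν hx
  have hR : ∀ x > ν, 0 ≤ debyeRemainder ν x := fun x hx => debyeRemainder_nonneg hν.le hx
  exact exists_tendsto_of_monotoneOn_of_antitoneOn_add
    (monotoneOn_phase_sub hφ h.hasDerivAt hp hR)
    (antitoneOn_phase_sub_add_div hφ h.hasDerivAt hp hpos hR
      fun x hx => debyeRemainder_mul_sq_le_quarter hν hx)
    fun x hx => div_nonneg (by norm_num) (hpos x hx).le

-- For `q = 4 / 3`, `(q - 1) / q²` is `3 / 16`, the bound on `R φ²` when `x² < 2 ν²`.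
lemma le_four_thirds_mul_debyePhase (hν : 0 < ν) (hx : x ∈ Ioo ν (√2 * ν)) :
    ψ x ≤ 4 / 3 * debyePhase ν x := by
  obtain ⟨x₀, hx₀, hneg⟩ := h.exists_neg
  obtain ⟨x₁, hx₁, hx₁'⟩ := exists_between (lt_min hx₀ hx.1)
  refine phase_le_mul_of_mul_sq_lt (fun t ht => hasDerivAt_debyePhase hν.le ht) h.hasDerivAt
    (fun t ht => div_pos (sqrt_pos.2 (sq_sub_sq_pos hν.le ht)) (hν.trans ht))
    (fun t ht => debyePhase_pos hν ht) (fun t ht => debyeRemainder_nonneg hν.le ht)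
    (by norm_num) (fun t ht => ?_) ⟨hx₁, hx₁'.trans_le (min_le_right _ _)⟩
    ((h.strictMonoOn hν.le hx₁ hx₀ (hx₁'.trans_le (min_le_left _ _))).trans hneg).le
  have ht2 : t ^ 2 < 2 * ν ^ 2 := by
    calc t ^ 2 < (√2 * ν) ^ 2 := pow_lt_pow_left₀ (ht.2.trans hx.2) (hν.trans ht.1).le two_ne_zero
      _ = 2 * ν ^ 2 := by rw [mul_pow, sq_sqrt zero_le_two]
  linarith [debyeRemainder_mul_sq_lt hν ht.1 ht2]

lemma lim_sub_debyePhase_mem_Ioo (hν : 2 < ν) {L : ℝ}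
    (hL : ∀ x > ν, L ∈ Icc (ψ x - debyePhase ν x)
      (ψ x - debyePhase ν x + 1 / 4 / debyePhase ν x)) :
    L ∈ Ioo (-7 * π / 4) (π / 4) := by
  -- At `φ = 2 / 5` both `φ` and `1 / (4 φ)` are small, so the bounds on `ψ` locate `L` up to `2 π`.
  obtain ⟨x, hx, hφx⟩ := exists_debyePhase_eq_two_fifths hν
  obtain ⟨hlower, hupper⟩ := hL x hx.1
  have hψ := h.le_four_thirds_mul_debyePhase (by linarith) hx
  rw [hφx] at hlower hupper hψ
  have := pi_gt_d2
  constructor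
  · linarith [h.neg_pi_lt x hx.1]
  · norm_num at hupper hψ
    linarith

end IsPruferPhase

section BesselPhase

open Filter Topology

variable {ν x : ℝ} {ψ : ℝ → ℝ}

lemma exists_besselJ_ne_zero (hν : 0 ≤ ν) : ∃ x > 0, besselJ ν x ≠ 0 := by
  by_contra! hzero
  have hseq : Tendsto (fun n : ℕ => ν * π / 2 + π / 4 + n * (2 * π)) atTop atTop :=
    tendsto_atTop_add_const_left _ _
      (tendsto_natCast_atTop_atTop.atTop_mul_const two_pi_pos)
  have hlim := (tendsto_sqrt_mul_besselJ_sub hν).comp hseq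
  have hconst : Tendsto (fun _ : ℕ => -√(2 / π)) atTop (𝓝 0) := by
    refine hlim.congr fun n => ?_
    have hphase : ν * π / 2 + π / 4 + n * (2 * π) - ν * π / 2 - π / 4 = n * (2 * π) := by ring
    have hpos : 0 < ν * π / 2 + π / 4 + n * (2 * π) := by positivity
    simp [hzero _ hpos, hphase]
  have hsqrt : 0 < √(2 / π) := sqrt_pos.2 (by positivity)
  linarith [tendsto_nhds_unique hconst tendsto_const_nhds]

lemma besselJ_ne_zero_of_mem_Ioc (hν : 2 < ν) (hx : x ∈ Ioc 0 ν) : besselJ ν x ≠ 0 :=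
  (isBesselSolution_besselJ hν).ne_zero_of_mem_Ioc (exists_besselJ_ne_zero (by linarith))
    (tendsto_mul_besselJ_mul_besselJDeriv hν.le) hx

lemma exists_isPruferPhase_besselJ (hν : 2 < ν) :
    ∃ ψ, IsPruferPhase ν (besselJ ν) (besselJDeriv ν) ψ :=
  (isBesselSolution_besselJ hν).exists_isPruferPhase (by linarith)
    (besselJ_ne_zero_of_mem_Ioc hν (right_mem_Ioc.2 (by linarith)))

lemma sin_phase_eq_zero_iff (hν : 2 < ν) (hψ : IsPruferPhase ν (besselJ ν) (besselJDeriv ν) ψ)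
    (hx : ν < x) : sin (ψ x) = 0 ↔ besselJ ν x = 0 := by
  have hν0 : 0 < ν := by linarith
  obtain ⟨κ, hκ, hamp⟩ := (isBesselSolution_besselJ hν).exists_pos_forall_le_pruferAmplitude
    (exists_besselJ_ne_zero hν0.le) hν0 hx
  have hA := (hκ.trans_le (hamp x le_rfl)).ne'
  have hS := (sqrt_pos.2 (sq_sub_sq_pos hν0.le hx)).ne'
  have hsq := hψ.sq_eq x hx
  constructor <;> intro hzero <;> simpa [hzero, hA, hS] using hsq

lemma tendsto_sin_phase_sq (hν : 2 < ν)
    (hψ : IsPruferPhase ν (besselJ ν) (besselJDeriv ν) ψ) :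
    Tendsto (fun n : ℕ => sin (ψ (ν * π / 2 + 3 * π / 4 + n * π)) ^ 2) atTop (𝓝 0) := by
  have hν0 : 0 < ν := by linarith
  set u : ℕ → ℝ := fun n => ν * π / 2 + 3 * π / 4 + n * π
  have hu : Tendsto u atTop atTop := tendsto_atTop_add_const_left _ _
    (tendsto_natCast_atTop_atTop.atTop_mul_const pi_pos)
  obtain ⟨κ, hκ, hamp⟩ := (isBesselSolution_besselJ hν).exists_pos_forall_le_pruferAmplitude
    (exists_besselJ_ne_zero hν0.le) hν0 (lt_add_one ν)
  have hcos : ∀ n, cos (u n - ν * π / 2 - π / 4) = 0 := fun n => by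
    rw [show u n - ν * π / 2 - π / 4 = π / 2 + n * π by simp only [u]; ring,
      cos_add_nat_mul_pi, cos_pi_div_two, mul_zero]
  have hJ : Tendsto (fun n => √(u n) * besselJ ν (u n)) atTop (𝓝 0) :=
    ((tendsto_sqrt_mul_besselJ_sub hν0.le).comp hu).congr fun n => by simp [hcos]
  have hbound : Tendsto (fun n => (√(u n) * besselJ ν (u n)) ^ 2 / κ) atTop (𝓝 0) := by
    simpa using (hJ.pow 2).div_const κ
  refine squeeze_zero' (Eventually.of_forall fun n => sq_nonneg _) ?_ hbound
  filter_upwards [hu.eventually_ge_atTop (ν + 1)] with n hn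
  have hun : ν < u n := by linarith
  have hun0 : 0 ≤ u n := by linarith
  rw [le_div_iff₀' hκ]
  calc κ * sin (ψ (u n)) ^ 2
      ≤ pruferAmplitude ν (besselJ ν) (besselJDeriv ν) (u n) * sin (ψ (u n)) ^ 2 := by
        gcongr
        exact hamp _ hn
    _ = √(u n ^ 2 - ν ^ 2) * besselJ ν (u n) ^ 2 := (hψ.sq_eq _ hun).symm
    _ ≤ u n * besselJ ν (u n) ^ 2 := by
        gcongr
        exact sqrt_le_iff.2 ⟨hun0, by nlinarith⟩
    _ = (√(u n) * besselJ ν (u n)) ^ 2 := by rw [mul_pow, sq_sqrt hun0]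

lemma sin_add_eq_zero_of_tendsto_phase_sub (hν : 2 < ν)
    (hψ : IsPruferPhase ν (besselJ ν) (besselJDeriv ν) ψ) {L : ℝ}
    (hL : Tendsto (fun x => ψ x - debyePhase ν x) atTop (𝓝 L)) : sin (L + 3 * π / 4) = 0 := by
  have hu : Tendsto (fun n : ℕ => ν * π / 2 + 3 * π / 4 + n * π) atTop atTop :=
    tendsto_atTop_add_const_left _ _ (tendsto_natCast_atTop_atTop.atTop_mul_const pi_pos)
  have hphase : Tendsto (fun n : ℕ => ψ (ν * π / 2 + 3 * π / 4 + n * π) - n * π) atTop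
      (𝓝 (L + 3 * π / 4)) := by
    have := ((hL.add (tendsto_debyePhase_sub ν)).add_const (3 * π / 4)).comp hu
    rw [add_zero] at this
    refine this.congr fun n => ?_
    simp only [Function.comp_apply]
    ring
  have hsin := ((continuous_sin.tendsto _).comp hphase).pow 2
  refine pow_eq_zero_iff two_ne_zero |>.1
    (tendsto_nhds_unique hsin ((tendsto_sin_phase_sq hν hψ).congr fun n => ?_))
  simp only [Function.comp_apply, sin_sub_nat_mul_pi, mul_pow, ← pow_mul, mul_comm n 2,
    Even.neg_one_pow (even_two_mul n), one_mul]

lemma neg_three_pi_div_four_mem_Icc (hν : 2 < ν)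
    (hψ : IsPruferPhase ν (besselJ ν) (besselJDeriv ν) ψ) (hx : ν < x) :
    -(3 * π / 4) ∈ Icc (ψ x - debyePhase ν x)
      (ψ x - debyePhase ν x + 1 / 4 / debyePhase ν x) := by
  obtain ⟨L, hlim, hL⟩ := hψ.exists_tendsto_sub_debyePhase (by linarith)
  obtain ⟨hlower, hupper⟩ := hψ.lim_sub_debyePhase_mem_Ioo hν hL
  have hsum : L + 3 * π / 4 = 0 :=
    (sin_eq_zero_iff_of_lt_of_lt (by linarith) (by linarith)).1
      (sin_add_eq_zero_of_tendsto_phase_sub hν hψ hlim)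
  exact eq_neg_of_add_eq_zero_left hsum ▸ hL x hx

end BesselPhase

section BesselZeros

variable {ν x j : ℝ} {k : ℕ}

lemma lt_of_isKthZero (hν : 2 < ν) (hj : IsKthZero ν k j) : ν < j := by
  by_contra! hle
  exact besselJ_ne_zero_of_mem_Ioc hν ⟨hj.1, hle⟩ hj.2.1

lemma phase_eq_of_isKthZero {ψ : ℝ → ℝ} (hν : 2 < ν)
    (hψ : IsPruferPhase ν (besselJ ν) (besselJDeriv ν) ψ) (hk : 1 ≤ k) (hj : IsKthZero ν k j) :
    ψ j = (k - 1) * π := by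
  have hνj := lt_of_isKthZero hν hj
  have hzeros : {x ∈ Ioo ν j | sin (ψ x) = 0} = {x | 0 < x ∧ x < j ∧ besselJ ν x = 0} := by
    ext x
    constructor
    · rintro ⟨⟨hνx, hxj⟩, hsin⟩
      exact ⟨by linarith, hxj, (sin_phase_eq_zero_iff hν hψ hνx).1 hsin⟩
    · rintro ⟨hx, hxj, hJ⟩
      have hνx : ν < x := by
        by_contra! hle
        exact besselJ_ne_zero_of_mem_Ioc hν ⟨hx, hle⟩ hJ
      exact ⟨⟨hνx, hxj⟩, (sin_phase_eq_zero_iff hν hψ hνx).2 hJ⟩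
  rw [eq_ncard_mul_pi_of_strictMonoOn (hψ.strictMonoOn (by linarith))
    (fun x hx => (hψ.hasDerivAt x hx).continuousAt.continuousWithinAt) hψ.neg_pi_lt hψ.exists_neg
    hνj ((sin_phase_eq_zero_iff hν hψ hνj).2 hj.2.1), hzeros, hj.2.2, Nat.cast_pred hk]

lemma debyePhase_sub_mem_Icc_of_isKthZero (hν : 2 < ν) (hk : 1 ≤ k) (hj : IsKthZero ν k j) :
    debyePhase ν j - (k - 1 / 4) * π ∈ Icc 0 (1 / 4 / debyePhase ν j) := by
  obtain ⟨ψ, hψ⟩ := exists_isPruferPhase_besselJ hν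
  obtain ⟨hlower, hupper⟩ := neg_three_pi_div_four_mem_Icc hν hψ (lt_of_isKthZero hν hj)
  rw [phase_eq_of_isKthZero hν hψ hk hj] at hlower hupper
  constructor <;> linarith

lemma le_of_isKthZero (hν : 2 < ν) (hk : 1 ≤ k) (hj : IsKthZero ν k j) (hx : ν ≤ x)
    (hφx : debyePhase ν x = (k - 1 / 4) * π) : x ≤ j := by
  have hnonneg := (debyePhase_sub_mem_Icc_of_isKthZero hν hk hj).1
  exact ((strictMonoOn_debyePhase (by linarith)).le_iff_le hx (lt_of_isKthZero hν hj).le).1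
    (by linarith)

lemma sub_mul_sq_debyePhase_le_of_isKthZero (hν : 2 < ν) (hk : 1 ≤ k) (hj : IsKthZero ν k j)
    (hx : ν ≤ x) (hφx : debyePhase ν x = (k - 1 / 4) * π) :
    (j - x) * debyePhase ν j ^ 2 ≤ j / 4 := by
  have hν0 : 0 < ν := by linarith
  have hφj := debyePhase_pos hν0 (lt_of_isKthZero hν hj)
  have hsmall := (debyePhase_sub_mem_Icc_of_isKthZero hν hk hj).2
  rw [← hφx] at hsmall
  calc (j - x) * debyePhase ν j ^ 2 = (j - x) * debyePhase ν j * debyePhase ν j := by ring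
    _ ≤ j * (debyePhase ν j - debyePhase ν x) * debyePhase ν j :=
        mul_le_mul_of_nonneg_right
          (sub_mul_debyePhase_le hν0 hx (le_of_isKthZero hν hk hj hx hφx)) hφj.le
    _ ≤ j * (1 / 4 / debyePhase ν j) * debyePhase ν j :=
        mul_le_mul_of_nonneg_right (mul_le_mul_of_nonneg_left hsmall hj.1.le) hφj.le
    _ = j / 4 := by field_simp

lemma add_le_two_mul_of_isKthZero (hν : 2 < ν) (hk : 1 ≤ k) (hj : IsKthZero ν k j) :
    ν + k ≤ 2 * j := by
  have hnonneg := (debyePhase_sub_mem_Icc_of_isKthZero hν hk hj).1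
  have hνj := lt_of_isKthZero hν hj
  have hk1 : (1 : ℝ) ≤ k := by exact_mod_cast hk
  nlinarith [debyePhase_le_self (by linarith : 0 ≤ ν) hj.1.le, pi_gt_three]

end BesselZeros

theorem zero_minkowski_approx_away_general (c : ℝ) (hc : 0 < c) :
    ∃ C > 0, ∀ ν : ℝ, 2 < ν → ∀ k : ℕ, 1 ≤ k → ∀ j : ℝ, IsKthZero ν k j → (1 + c) * ν ≤ j →
      ∀ xstar : ℝ, ν ≤ xstar → xstar * gfun (ν / xstar) = (k : ℝ) - 1 / 4 →
      |j - xstar| ≤ C / (ν + (k : ℝ)) := by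
  set κ := π * gfun (1 / (1 + c))
  have hκ : 0 < κ := mul_pos pi_pos
    (gfun_pos ⟨by positivity, (div_lt_one (by linarith)).2 (by linarith)⟩)
  refine ⟨1 / (2 * κ ^ 2), by positivity, fun ν hν k hk j hj hcj x hx hxg => ?_⟩
  have hν0 : 0 < ν := by linarith
  have hφx : debyePhase ν x = (k - 1 / 4) * π := by
    rw [← pi_mul_mul_gfun_div (hν0.trans_le hx), hxg, mul_comm]
  have hdist : 0 ≤ j - x := sub_nonneg.2 (le_of_isKthZero hν hk hj hx hφx)
  have hj_sq : (j - x) * (κ * j) ^ 2 ≤ j / 4 := by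
    have hκj : 0 ≤ κ * j := mul_nonneg hκ.le hj.1.le
    exact (mul_le_mul_of_nonneg_left
      (pow_le_pow_left₀ hκj (mul_gfun_le_debyePhase hν0.le hc hj.1 hcj) 2) hdist).trans
      (sub_mul_sq_debyePhase_le_of_isKthZero hν hk hj hx hφx)
  rw [abs_of_nonneg hdist, le_div_iff₀ (by positivity)]
  calc (j - x) * (ν + k) ≤ (j - x) * (2 * j) :=
        mul_le_mul_of_nonneg_left (add_le_two_mul_of_isKthZero hν hk hj) hdist
    _ ≤ 1 / (2 * κ ^ 2) := by
        rw [le_div_iff₀ (by positivity)]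
        refine le_of_mul_le_mul_right ?_ hj.1
        linarith

/-- approximation `j_{ν,k} = F(ν, k - 1/4) + O(1/(ν+k))` in the regime
`j ≥ (1+c)ν`, for large `ν`. -/
theorem zero_minkowski_approx_away :
    ∃ c N C : ℝ, 0 < c ∧ c < 1 ∧ 0 < N ∧ 0 < C ∧ ∀ ν : ℝ, N < ν → ∀ k : ℕ, 1 ≤ k →
      ∀ j : ℝ, IsKthZero ν k j → (1 + c) * ν ≤ j →
      ∀ xstar : ℝ, ν ≤ xstar → xstar * gfun (ν / xstar) = (k : ℝ) - 1 / 4 →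
      |j - xstar| ≤ C / (ν + (k : ℝ)) := by
  obtain ⟨C, hC, hbound⟩ := zero_minkowski_approx_away_general (1 / 2) (by norm_num)
  exact ⟨1 / 2, 2, C, by norm_num, by norm_num, two_pos, hC, hbound⟩
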